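/- arXiv:1002.1544 — 4 statements merged into one kernel-verified Lean document; each statement's English description precedes it below -/
import Mathlib

section
/- Let n ≥ 1 and a_1, …, a_n, a_{n+1} > 0, and let ξ = (ξ_1,…,ξ_n) have the Dirichlet distribution Dir_n(a_1,…,a_n; a_{n+1}) on 𝒮_n^<. Then ξ_1, …, ξ_n are negatively associated: for every pair of disjoint subsets A_1, A_2 of {1,…,n} and every pair of bounded measurable functions f_1, f_2 (of the coordinates indexed by A_1 and A_2 respectively) that are nondecreasing in each coordinate, Cov(f_1(ξ_i, i ∈ A_1), f_2(ξ_j, j ∈ A_2)) ≤ 0. -/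
/-!
Write `μ_a` for the measure with density `∏ y_i ^ (a_i - 1)` on the positive orthant and
`σ y = ∑ y_i`. The Dirichlet law has density proportional to `(1 - σ y)₊ ^ (b - 1)` with respect
to `μ_a`. Split the coordinates into `x` (those in `A₁`) and `z` (the others), with
`α = ∑_{i ∈ A₁} a_i` and `β = ∑_{i ∉ A₁} a_i`. With `s = σ x`, the three quantities `s`,
`x / s` and `z / (1 - s)` are independent, and `s` has the `Beta(α, β + b)` law. Since
`f₁ = f₁ (s • (x / s))` is nondecreasing in `s` and `f₂ = f₂ ((1 - s) • (z / (1 - s)))` is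
nonincreasing in `s`, integrating out the two directions leaves
`E[f₁ f₂] = E[U(s) V(s)]` with `U` nondecreasing and `V` nonincreasing, and Chebyshev's
inequality on the line finishes the argument.

The independence is encoded without any surface measure on the simplex (`lintegral_factor`).
The role of polar coordinates is played by `polar`: by homogeneity of `μ_a`,
`Γ(α) ∫ G dμ_a = ∫_{s > 0} s ^ (α - 1) ∫ e ^ (-σ y) G ((s / σ y) y) dμ_a(y) ds`,
which says that a gamma vector has direction independent of its sum. For the coordinates `z`
plain rescaling by `1 - s` suffices (`lintegral_slice`).

All this is done with `ℝ≥0∞`-valued integrals, so no integrability is needed. The unnormalized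
inequality `na_lintegral` is `(∫ 1) (∫ f₁ f₂) ≤ (∫ f₁) (∫ f₂)`. The normalization of the
Dirichlet density, needed to turn this into a covariance inequality, is again `polar` together
with the Beta integral. Real bounded functions are reduced to nonnegative ones by adding a
constant. When `A₁` is empty there is no `s`, but then `f₁` is constant.
-/


open MeasureTheory Filter Set
open scoped ENNReal Topology

noncomputable section

/-- The open simplex `𝒮_n^< = {y : y_i > 0, ∑ y_i < 1}`. -/
def simplexLt (n : ℕ) : Set (Fin n → ℝ) := {y | (∀ i, 0 < y i) ∧ ∑ i, y i < 1}

/-- The Dirichlet distribution `Dir_n(a_1,…,a_n; b)` on the open simplex `𝒮_n^<`,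
given by its density with respect to Lebesgue measure. -/
def dirichletLt (n : ℕ) (a : Fin n → ℝ) (b : ℝ) : Measure (Fin n → ℝ) :=
  volume.withDensity ((simplexLt n).indicator fun y =>
    ENNReal.ofReal (Real.Gamma ((∑ i, a i) + b) / ((∏ i, Real.Gamma (a i)) * Real.Gamma b) *
      (∏ i, y i ^ (a i - 1)) * (1 - ∑ i, y i) ^ (b - 1)))

section

/-! ### Homogeneous product densities -/

/-- The power density `t ↦ t ^ (α - 1)` on `(0, ∞)`, extended by `0` to `t ≤ 0`. -/
def powPos (α t : ℝ) : ℝ≥0∞ := ENNReal.ofReal (if 0 < t then t ^ (α - 1) else 0)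

@[fun_prop]
lemma measurable_powPos (α : ℝ) : Measurable (powPos α) := by
  unfold powPos
  exact (Measurable.ite measurableSet_Ioi (by fun_prop) (by fun_prop)).ennreal_ofReal

lemma powPos_of_nonpos {α t : ℝ} (ht : t ≤ 0) : powPos α t = 0 := by
  simp [powPos, not_lt.mpr ht]

lemma powPos_of_pos {α t : ℝ} (ht : 0 < t) : powPos α t = ENNReal.ofReal (t ^ (α - 1)) := by
  simp [powPos, ht]

lemma powPos_mul {α c : ℝ} (hc : 0 < c) (t : ℝ) :
    powPos α (c * t) = ENNReal.ofReal (c ^ (α - 1)) * powPos α t := by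
  rcases le_or_gt t 0 with ht | ht
  · rw [powPos_of_nonpos ht, powPos_of_nonpos (mul_nonpos_of_nonneg_of_nonpos hc.le ht), mul_zero]
  · rw [powPos_of_pos ht, powPos_of_pos (mul_pos hc ht), Real.mul_rpow hc.le ht.le,
      ENNReal.ofReal_mul (by positivity)]

variable {ι : Type*} [Fintype ι]

/-- The unnormalized product density `∏ i, y i ^ (a i - 1)` on the open positive orthant,
extended by `0`. -/
def dens (a : ι → ℝ) (y : ι → ℝ) : ℝ≥0∞ := ∏ i, powPos (a i) (y i)

@[fun_prop]
lemma measurable_dens (a : ι → ℝ) : Measurable (dens a) := by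
  unfold dens
  fun_prop

lemma dens_eq_zero {a y : ι → ℝ} (h : ¬ ∀ i, 0 < y i) : dens a y = 0 := by
  push Not at h
  obtain ⟨i, hi⟩ := h
  exact Finset.prod_eq_zero (Finset.mem_univ i) (powPos_of_nonpos hi)

lemma dens_smul (a : ι → ℝ) {c : ℝ} (hc : 0 < c) (y : ι → ℝ) :
    dens a (c • y) = ENNReal.ofReal (c ^ ((∑ i, a i) - Fintype.card ι)) * dens a y := by
  simp only [dens, Pi.smul_apply, smul_eq_mul, powPos_mul hc, Finset.prod_mul_distrib]
  congr 1
  rw [← ENNReal.ofReal_prod_of_nonneg (fun i _ => by positivity), ← Real.rpow_sum_of_pos hc]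
  simp

/-- Integrands against `dens a` only matter on the open positive orthant. -/
lemma lintegral_dens_congr {a : ι → ℝ} {F G : (ι → ℝ) → ℝ≥0∞}
    (h : ∀ y, (∀ i, 0 < y i) → F y = G y) :
    ∫⁻ y, dens a y * F y = ∫⁻ y, dens a y * G y := by
  refine lintegral_congr fun y => ?_
  by_cases hy : ∀ i, 0 < y i
  · rw [h y hy]
  · rw [dens_eq_zero hy, zero_mul, zero_mul]

lemma lintegral_smul_pi (F : (ι → ℝ) → ℝ≥0∞) (hF : Measurable F) {c : ℝ} (hc : 0 < c) :
    ∫⁻ y, F y = ENNReal.ofReal (c ^ (Fintype.card ι : ℝ)) * ∫⁻ y, F (c • y) := by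
  have h := Measure.map_addHaar_smul (volume : Measure (ι → ℝ)) hc.ne'
  have h2 : ∫⁻ y, F (c • y) = ∫⁻ y, F y ∂(Measure.map (c • ·) (volume : Measure (ι → ℝ))) :=
    (lintegral_map hF (by fun_prop)).symm
  rw [h2, h, lintegral_smul_measure, smul_eq_mul, ← mul_assoc,
    ← ENNReal.ofReal_mul (by positivity)]
  rw [Module.finrank_fintype_fun_eq_card, abs_of_pos (by positivity), Real.rpow_natCast,
    mul_inv_cancel₀ (by positivity)]
  simp

lemma lintegral_mul_real (F : ℝ → ℝ≥0∞) (hF : Measurable F) {c : ℝ} (hc : 0 < c) :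
    ∫⁻ y, F y = ENNReal.ofReal c * ∫⁻ y, F (c * y) := by
  have h := Measure.map_addHaar_smul (volume : Measure ℝ) hc.ne'
  have h2 : ∫⁻ y, F (c * y) = ∫⁻ y, F y ∂(Measure.map (c • ·) (volume : Measure ℝ)) :=
    (lintegral_map hF (by fun_prop)).symm
  rw [h2, h, lintegral_smul_measure, smul_eq_mul, ← mul_assoc,
    ← ENNReal.ofReal_mul (by positivity)]
  rw [Module.finrank_self, abs_of_pos (by positivity), pow_one, mul_inv_cancel₀ (by positivity)]
  simp

/-- Homogeneity of degree `∑ i, a i` of the measure with density `dens a`. -/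
lemma lintegral_dens_smul (a : ι → ℝ) (F : (ι → ℝ) → ℝ≥0∞) (hF : Measurable F)
    {c : ℝ} (hc : 0 < c) :
    ∫⁻ y, dens a y * F y = ENNReal.ofReal (c ^ (∑ i, a i)) * ∫⁻ y, dens a y * F (c • y) := by
  rw [lintegral_smul_pi (fun y => dens a y * F y) (by fun_prop) hc]
  simp only [dens_smul a hc, mul_assoc]
  rw [lintegral_const_mul _ (by fun_prop), ← mul_assoc, ← ENNReal.ofReal_mul (by positivity),
    ← Real.rpow_add hc]
  congr 3
  ring

/-! ### Gamma integrals and polar decomposition -/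

lemma lintegral_powPos_exp {α : ℝ} (hα : 0 < α) :
    ∫⁻ t, powPos α t * ENNReal.ofReal (Real.exp (-t)) = ENNReal.ofReal (Real.Gamma α) := by
  have h : ∀ t, powPos α t * ENNReal.ofReal (Real.exp (-t)) = (Ioi (0 : ℝ)).indicator
      (fun t => ENNReal.ofReal (Real.exp (-t) * t ^ (α - 1))) t := by
    intro t
    rcases le_or_gt t 0 with ht | ht
    · rw [powPos_of_nonpos ht, zero_mul, indicator_of_notMem (by simpa using ht)]
    · rw [powPos_of_pos ht, indicator_of_mem (by simpa using ht), mul_comm,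
        ← ENNReal.ofReal_mul (by positivity)]
  simp_rw [h]
  rw [lintegral_indicator measurableSet_Ioi, Real.Gamma_eq_integral hα,
    ofReal_integral_eq_lintegral_ofReal (Real.GammaIntegral_convergent hα)]
  filter_upwards [ae_restrict_mem measurableSet_Ioi] with t ht
  have : (0 : ℝ) < t := ht
  simp only [Pi.zero_apply]
  positivity

/-- The Gamma integral `∫ t ^ (α - 1) e ^ (-t) dt` after the substitution `t = σ / l`. -/
lemma lintegral_powPos_inv {α σ : ℝ} (hα : 0 < α) (hσ : 0 < σ) :
    ∫⁻ l, powPos α l * ENNReal.ofReal (l ^ (-α) * (Real.exp (-(σ / l)) * (σ / l) ^ α))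
      = ENNReal.ofReal (Real.Gamma α) := by
  have himg : (fun l : ℝ => σ / l) '' Ioi 0 = Ioi 0 := by
    ext t
    simp only [mem_image, mem_Ioi]
    constructor
    · rintro ⟨l, hl, rfl⟩; positivity
    · intro ht; exact ⟨σ / t, by positivity, by field_simp⟩
  have hsub := lintegral_image_eq_lintegral_abs_deriv_mul (s := Ioi (0 : ℝ))
    (f := fun l => σ / l) (f' := fun l => -(σ / l ^ 2)) measurableSet_Ioi
    (fun x hx => by
      have hx' : x ≠ 0 := ne_of_gt hx
      have := ((hasDerivAt_inv hx').const_mul σ).hasDerivWithinAt (s := Ioi (0 : ℝ))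
      simpa [div_eq_mul_inv] using this)
    (fun x hx y hy hxy => by
      have hx' : (0 : ℝ) < x := hx
      have hy' : (0 : ℝ) < y := hy
      simp only at hxy
      rw [div_eq_div_iff hx'.ne' hy'.ne'] at hxy
      exact (mul_left_cancel₀ hσ.ne' hxy).symm)
    (fun t => powPos α t * ENNReal.ofReal (Real.exp (-t)))
  have hsupp : ∀ F : ℝ → ℝ≥0∞, ∫⁻ t, powPos α t * F t = ∫⁻ t in Ioi 0, powPos α t * F t := by
    intro F
    rw [← lintegral_indicator measurableSet_Ioi]
    refine lintegral_congr fun t => ?_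
    rcases le_or_gt t 0 with ht | ht
    · rw [powPos_of_nonpos ht, indicator_of_notMem (by simpa using ht), zero_mul]
    · rw [indicator_of_mem (by simpa using ht)]
  rw [himg, ← hsupp, lintegral_powPos_exp hα] at hsub
  rw [hsub, hsupp]
  refine setLIntegral_congr_fun measurableSet_Ioi fun l hl => ?_
  have hl : (0 : ℝ) < l := hl
  rw [powPos_of_pos hl, powPos_of_pos (by positivity), abs_neg, abs_of_pos (by positivity),
    ← ENNReal.ofReal_mul (by positivity), ← ENNReal.ofReal_mul (by positivity),
    ← ENNReal.ofReal_mul (by positivity)]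
  congr 1
  rw [Real.rpow_sub_one hl.ne', Real.rpow_sub_one (by positivity), Real.rpow_neg hl.le]
  have := (Real.rpow_pos_of_pos hl α).ne'
  field_simp

/-- Polar decomposition of a homogeneous product density with respect to `σ y = ∑ i, y i`:
the direction `y / σ y` is distributed as that of a vector of independent gamma variables.
The proof substitutes `s = l * σ y` for fixed `y`, rescales `y` by `l` for fixed `l`, and
integrates out `l` with `lintegral_powPos_inv`. -/
lemma polar [Nonempty ι] (a : ι → ℝ) (ha : ∀ i, 0 < a i) (G : (ι → ℝ) → ℝ≥0∞)
    (hG : Measurable G) :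
    ENNReal.ofReal (Real.Gamma (∑ i, a i)) * ∫⁻ y, dens a y * G y =
      ∫⁻ s, powPos (∑ i, a i) s * ∫⁻ y, dens a y *
        (ENNReal.ofReal (Real.exp (-∑ i, y i)) * G ((s / ∑ i, y i) • y)) := by
  have hα : 0 < ∑ i, a i := Finset.sum_pos (fun i _ => ha i) Finset.univ_nonempty
  set α := ∑ i, a i with hαdef
  have hσ : ∀ y : ι → ℝ, (∀ i, 0 < y i) → 0 < ∑ i, y i :=
    fun y hy => Finset.sum_pos (fun i _ => hy i) Finset.univ_nonempty
  symm
  calc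
    _ = ∫⁻ s, ∫⁻ y, dens a y * (ENNReal.ofReal (Real.exp (-∑ i, y i)) *
          (powPos α s * G ((s / ∑ i, y i) • y))) := by
        refine lintegral_congr fun s => ?_
        rw [← lintegral_const_mul _ (by fun_prop)]
        refine lintegral_congr fun y => ?_
        ring
    _ = ∫⁻ y, dens a y * (ENNReal.ofReal (Real.exp (-∑ i, y i)) *
          ∫⁻ s, powPos α s * G ((s / ∑ i, y i) • y)) := by
        rw [lintegral_lintegral_swap (by fun_prop)]
        refine lintegral_congr fun y => ?_
        rw [lintegral_const_mul _ (by fun_prop), lintegral_const_mul _ (by fun_prop)]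
    _ = ∫⁻ y, dens a y * (ENNReal.ofReal (Real.exp (-∑ i, y i) * (∑ i, y i) ^ α) *
          ∫⁻ l, powPos α l * G (l • y)) := by
        refine lintegral_dens_congr fun y hy => ?_
        have hs := hσ y hy
        rw [lintegral_mul_real _ (by fun_prop) hs]
        simp only [powPos_mul hs, mul_div_cancel_left₀ _ hs.ne', mul_assoc]
        rw [lintegral_const_mul _ (by fun_prop), ENNReal.ofReal_mul (by positivity),
          ← mul_assoc (ENNReal.ofReal (∑ i, y i)), ← ENNReal.ofReal_mul hs.le,
          Real.rpow_sub_one hs.ne', mul_div_cancel₀ _ hs.ne', mul_assoc]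
    _ = ∫⁻ l, powPos α l * ∫⁻ y, dens a y * (ENNReal.ofReal (Real.exp (-∑ i, y i) *
          (∑ i, y i) ^ α) * G (l • y)) := by
        have : ∀ y, dens a y * (ENNReal.ofReal (Real.exp (-∑ i, y i) * (∑ i, y i) ^ α) *
          ∫⁻ l, powPos α l * G (l • y)) = ∫⁻ l, powPos α l * (dens a y *
            (ENNReal.ofReal (Real.exp (-∑ i, y i) * (∑ i, y i) ^ α) * G (l • y))) := by
          intro y
          rw [← lintegral_const_mul _ (by fun_prop), ← lintegral_const_mul _ (by fun_prop)]
          refine lintegral_congr fun s => ?_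
          ring
        simp_rw [this]
        rw [lintegral_lintegral_swap (by fun_prop)]
        refine lintegral_congr fun l => ?_
        rw [lintegral_const_mul _ (by fun_prop)]
    _ = ∫⁻ l, powPos α l * ∫⁻ y, dens a y * (ENNReal.ofReal (l ^ (-α) *
          (Real.exp (-((∑ i, y i) / l)) * ((∑ i, y i) / l) ^ α)) * G y) := by
        refine lintegral_congr fun l => ?_
        rcases le_or_gt l 0 with hl | hl
        · rw [powPos_of_nonpos hl, zero_mul, zero_mul]
        · congr 1
          rw [lintegral_dens_smul a (fun y => ENNReal.ofReal (l ^ (-α) *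
            (Real.exp (-((∑ i, y i) / l)) * ((∑ i, y i) / l) ^ α)) * G y) (by fun_prop) hl,
            ← hαdef]
          rw [← lintegral_const_mul _ (by fun_prop)]
          refine lintegral_congr fun y => ?_
          have h1 : (∑ i, (l • y) i) / l = ∑ i, y i := by
            simp only [Pi.smul_apply, smul_eq_mul, ← Finset.mul_sum]
            field_simp
          simp only [h1]
          rw [mul_left_comm (ENNReal.ofReal (l ^ α)), ← mul_assoc (ENNReal.ofReal (l ^ α)),
            ← ENNReal.ofReal_mul (by positivity), Real.rpow_neg hl.le,
            mul_inv_cancel_left₀ (by positivity)]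
    _ = ∫⁻ y, dens a y * ((∫⁻ l, powPos α l * ENNReal.ofReal (l ^ (-α) *
          (Real.exp (-((∑ i, y i) / l)) * ((∑ i, y i) / l) ^ α))) * G y) := by
        have : ∀ l, powPos α l * ∫⁻ y, dens a y * (ENNReal.ofReal (l ^ (-α) *
          (Real.exp (-((∑ i, y i) / l)) * ((∑ i, y i) / l) ^ α)) * G y) =
            ∫⁻ y, dens a y * ((powPos α l * ENNReal.ofReal (l ^ (-α) *
          (Real.exp (-((∑ i, y i) / l)) * ((∑ i, y i) / l) ^ α))) * G y) := by
          intro l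
          rw [← lintegral_const_mul _ (by fun_prop)]
          refine lintegral_congr fun s => ?_
          ring
        simp_rw [this]
        rw [lintegral_lintegral_swap (by fun_prop)]
        refine lintegral_congr fun y => ?_
        rw [lintegral_const_mul _ (by fun_prop), lintegral_mul_const _ (by fun_prop)]
    _ = _ := by
        rw [← lintegral_const_mul _ (by fun_prop)]
        rw [lintegral_dens_congr (G := fun y => ENNReal.ofReal (Real.Gamma α) * G y)
          (fun y hy => by rw [lintegral_powPos_inv hα (hσ y hy)])]
        refine lintegral_congr fun y => ?_
        ring

/-- Total mass of the unnormalized law of independent gamma variables. -/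
lemma lintegral_dens_exp (a : ι → ℝ) (ha : ∀ i, 0 < a i) :
    ∫⁻ y, dens a y * ENNReal.ofReal (Real.exp (-∑ i, y i)) =
      ENNReal.ofReal (∏ i, Real.Gamma (a i)) := by
  set f : ι → ℝ → ℝ := fun i t => (if 0 < t then t ^ (a i - 1) else 0) * Real.exp (-t) with hf
  have hfm : ∀ i, Measurable (f i) := fun i =>
    (Measurable.ite measurableSet_Ioi (by fun_prop) (by fun_prop)).mul (by fun_prop)
  have hf0 : ∀ i t, 0 ≤ f i t := by
    intro i t
    simp only [hf]
    split_ifs <;> positivity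
  have hpow : ∀ i t, ENNReal.ofReal (f i t) =
      powPos (a i) t * ENNReal.ofReal (Real.exp (-t)) := by
    intro i t
    simp only [hf, powPos]
    rw [ENNReal.ofReal_mul]
    split_ifs <;> positivity
  have hint : ∀ i, ∫⁻ t, ENNReal.ofReal (f i t) = ENNReal.ofReal (Real.Gamma (a i)) := by
    intro i
    simp_rw [hpow]
    exact lintegral_powPos_exp (ha i)
  have hfi : ∀ i, Integrable (f i) := fun i =>
    (lintegral_ofReal_ne_top_iff_integrable (hfm i).aestronglyMeasurable
      (Eventually.of_forall (hf0 i))).1 (by rw [hint]; exact ENNReal.ofReal_ne_top)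
  have h1 : ∀ y : ι → ℝ, dens a y * ENNReal.ofReal (Real.exp (-∑ i, y i)) =
      ENNReal.ofReal (∏ i, f i (y i)) := by
    intro y
    rw [ENNReal.ofReal_prod_of_nonneg (fun i _ => hf0 i _)]
    simp_rw [hpow]
    rw [dens, Finset.prod_mul_distrib, ← ENNReal.ofReal_prod_of_nonneg (fun i _ => by positivity),
      ← Real.exp_sum, Finset.sum_neg_distrib]
  have hprod : Integrable (fun y : ι → ℝ => ∏ i, f i (y i)) volume := Integrable.fintype_prod hfi
  simp_rw [h1]
  rw [← ofReal_integral_eq_lintegral_ofReal hprod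
    (Eventually.of_forall fun y => Finset.prod_nonneg fun i _ => hf0 i _),
    integral_fintype_prod_volume_eq_prod]
  congr 1
  refine Finset.prod_congr rfl fun i _ => ?_
  rw [integral_eq_lintegral_of_nonneg_ae (Eventually.of_forall (hf0 i))
    (hfm i).aestronglyMeasurable, hint,
    ENNReal.toReal_ofReal (Real.Gamma_pos_of_pos (ha i)).le]

/-! ### Chebyshev inequality -/

lemma rearrange {a b c d : ℝ≥0∞} (hab : a ≤ b) (hdc : d ≤ c) :
    a * c + b * d ≤ a * d + b * c := by
  obtain ⟨x, rfl⟩ := exists_add_of_le hab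
  obtain ⟨y, rfl⟩ := exists_add_of_le hdc
  calc _ ≤ a * (d + y) + (a + x) * d + x * y := le_self_add
    _ = _ := by ring

/-- Chebyshev's association inequality on the line, for a measure of arbitrary mass: integrate
`(U s - U t) * (V s - V t) ≤ 0` (written without subtraction) over pairs `(s, t)`. -/
lemma chebyshev (κ : Measure ℝ) [SFinite κ] (U V : ℝ → ℝ≥0∞) (hU : Measurable U)
    (hV : Measurable V) (hmU : Monotone U) (hmV : Antitone V) :
    κ univ * ∫⁻ s, U s * V s ∂κ ≤ (∫⁻ s, U s ∂κ) * ∫⁻ s, V s ∂κ := by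
  have key : ∫⁻ s, ∫⁻ t, (U s * V s + U t * V t) ∂κ ∂κ ≤
      ∫⁻ s, ∫⁻ t, (U s * V t + U t * V s) ∂κ ∂κ := by
    refine lintegral_mono fun s => lintegral_mono fun t => ?_
    rcases le_total s t with h | h
    · exact rearrange (hmU h) (hmV h)
    · have := rearrange (hmU h) (hmV h)
      rwa [add_comm, add_comm (U t * V s)] at this
  have e1 : ∫⁻ s, ∫⁻ t, (U s * V s + U t * V t) ∂κ ∂κ =
      2 * (κ univ * ∫⁻ s, U s * V s ∂κ) := by
    have : ∀ s, ∫⁻ t, (U s * V s + U t * V t) ∂κ =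
        κ univ * (U s * V s) + ∫⁻ t, U t * V t ∂κ := by
      intro s
      rw [lintegral_add_left (by fun_prop), lintegral_const, mul_comm]
    simp_rw [this]
    rw [lintegral_add_left (by fun_prop), lintegral_const_mul _ (by fun_prop), lintegral_const]
    ring
  have e2 : ∫⁻ s, ∫⁻ t, (U s * V t + U t * V s) ∂κ ∂κ =
      2 * ((∫⁻ s, U s ∂κ) * ∫⁻ s, V s ∂κ) := by
    have : ∀ s, ∫⁻ t, (U s * V t + U t * V s) ∂κ =
        U s * (∫⁻ t, V t ∂κ) + (∫⁻ t, U t ∂κ) * V s := by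
      intro s
      rw [lintegral_add_left (by fun_prop), lintegral_const_mul _ (by fun_prop),
        lintegral_mul_const _ (by fun_prop)]
    simp_rw [this]
    rw [lintegral_add_left (by fun_prop), lintegral_const_mul _ (by fun_prop),
      lintegral_mul_const _ (by fun_prop)]
    ring
  rw [e1, e2] at key
  exact (ENNReal.mul_le_mul_iff_right (by norm_num) (by norm_num)).1 key

/-! ### Beta and Dirichlet integrals -/

lemma lintegral_powPos_beta {α β : ℝ} (hα : 0 < α) (hβ : 0 < β) :
    ∫⁻ s, powPos α s * powPos β (1 - s) = ENNReal.ofReal (ProbabilityTheory.beta α β) := by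
  have hB := ProbabilityTheory.beta_pos hα hβ
  have h : ∀ s, powPos α s * powPos β (1 - s) =
      ENNReal.ofReal (ProbabilityTheory.beta α β) * ProbabilityTheory.betaPDF α β s := by
    intro s
    rcases le_or_gt s 0 with h0 | h0
    · rw [powPos_of_nonpos h0, ProbabilityTheory.betaPDF_eq_zero_of_nonpos h0, zero_mul, mul_zero]
    rcases le_or_gt 1 s with h1 | h1
    · rw [powPos_of_nonpos (sub_nonpos.2 h1), ProbabilityTheory.betaPDF_eq_zero_of_one_le h1,
        mul_zero, mul_zero]
    · have h1' : 0 < 1 - s := sub_pos.2 h1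
      rw [powPos_of_pos h0, powPos_of_pos h1', ProbabilityTheory.betaPDF_of_pos_lt_one h0 h1,
        ← ENNReal.ofReal_mul (by positivity), ← ENNReal.ofReal_mul hB.le]
      congr 1
      field_simp
  simp_rw [h]
  rw [lintegral_const_mul _ (by unfold ProbabilityTheory.betaPDF; fun_prop),
    ProbabilityTheory.lintegral_betaPDF_eq_one hα hβ, mul_one]

lemma sum_div_smul [Nonempty ι] {y : ι → ℝ} (hy : ∀ i, 0 < y i) (s : ℝ) :
    ∑ i, ((s / ∑ j, y j) • y) i = s := by
  have : 0 < ∑ i, y i := Finset.sum_pos (fun i _ => hy i) Finset.univ_nonempty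
  simp only [Pi.smul_apply, smul_eq_mul, ← Finset.mul_sum]
  field_simp

/-- The Dirichlet integral. -/
lemma lintegral_dens_powPos [Nonempty ι] (a : ι → ℝ) {b : ℝ} (ha : ∀ i, 0 < a i) (hb : 0 < b) :
    ∫⁻ y, dens a y * powPos b (1 - ∑ i, y i) =
      ENNReal.ofReal ((∏ i, Real.Gamma (a i)) * Real.Gamma b / Real.Gamma ((∑ i, a i) + b)) := by
  have hα : 0 < ∑ i, a i := Finset.sum_pos (fun i _ => ha i) Finset.univ_nonempty
  have hΓ := Real.Gamma_pos_of_pos hα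
  have h := polar a ha (fun y => powPos b (1 - ∑ i, y i)) (by fun_prop)
  have h2 : ∀ s : ℝ, ∫⁻ y, dens a y * (ENNReal.ofReal (Real.exp (-∑ i, y i)) *
      powPos b (1 - ∑ i, ((s / ∑ j, y j) • y) i)) =
      powPos b (1 - s) * ENNReal.ofReal (∏ i, Real.Gamma (a i)) := by
    intro s
    rw [lintegral_dens_congr (G := fun y => ENNReal.ofReal (Real.exp (-∑ i, y i)) *
      powPos b (1 - s)) (fun y hy => by rw [sum_div_smul hy])]
    simp_rw [← mul_assoc]
    rw [lintegral_mul_const _ (by fun_prop), lintegral_dens_exp a ha, mul_comm]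
  simp_rw [h2, ← mul_assoc] at h
  rw [lintegral_mul_const _ (by fun_prop), lintegral_powPos_beta hα hb,
    ← ENNReal.ofReal_mul (ProbabilityTheory.beta_pos hα hb).le] at h
  refine (ENNReal.mul_right_inj (ENNReal.ofReal_pos.2 hΓ).ne' ENNReal.ofReal_ne_top).1 ?_
  rw [h, ← ENNReal.ofReal_mul hΓ.le, ProbabilityTheory.beta]
  congr 1
  ring

/-! ### Factorization along a splitting of the coordinates -/

/-- Rescaling of the coordinates outside `A₁` once those in `A₁` have sum `s`. For `1 ≤ s` both
sides vanish. -/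
lemma lintegral_slice (a : ι → ℝ) (b s : ℝ) (φ : (ι → ℝ) → ℝ≥0∞) (hφ : Measurable φ) :
    ∫⁻ z, dens a z * (powPos b (1 - s - ∑ i, z i) * φ z) =
      powPos ((∑ i, a i) + b) (1 - s) *
        ∫⁻ z, dens a z * (powPos b (1 - ∑ i, z i) * φ ((1 - s) • z)) := by
  rcases le_or_gt (1 - s) 0 with hs | hs
  · rw [powPos_of_nonpos hs, zero_mul, lintegral_dens_congr (G := fun _ => 0)]
    · simp
    · intro y hy
      rw [powPos_of_nonpos, zero_mul]
      have : 0 ≤ ∑ i, y i := Finset.sum_nonneg fun i _ => (hy i).le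
      linarith
  · rw [lintegral_dens_smul a _ (by fun_prop) hs]
    have h : ∀ z : ι → ℝ, 1 - s - ∑ i, ((1 - s) • z) i = (1 - s) * (1 - ∑ i, z i) := by
      intro z
      simp only [Pi.smul_apply, smul_eq_mul, ← Finset.mul_sum]
      ring
    simp_rw [h, powPos_mul hs]
    rw [powPos_of_pos hs, add_sub_assoc, Real.rpow_add hs, ENNReal.ofReal_mul (by positivity),
      mul_assoc, ← lintegral_const_mul (ENNReal.ofReal ((1 - s) ^ (b - 1))) (by fun_prop)]
    congr 1
    refine lintegral_congr fun z => ?_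
    ring

lemma lintegral_split (p : ι → Prop) [DecidablePred p] (a : ι → ℝ) (b : ℝ)
    (φ₁ : ({i // p i} → ℝ) → ℝ≥0∞) (φ₂ : ({i // ¬ p i} → ℝ) → ℝ≥0∞)
    (h₁ : Measurable φ₁) (h₂ : Measurable φ₂) :
    ∫⁻ y, dens a y * (powPos b (1 - ∑ i, y i) * (φ₁ (fun i => y i) * φ₂ (fun i => y i))) =
      ∫⁻ x, dens (fun i : {i // p i} => a i) x * (φ₁ x *
        ∫⁻ z, dens (fun i : {i // ¬ p i} => a i) z *
          (powPos b (1 - (∑ i, x i) - ∑ i, z i) * φ₂ z)) := by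
  have hmp := volume_preserving_piEquivPiSubtypeProd (fun _ : ι => ℝ) p
  set H : ({i // p i} → ℝ) × ({i // ¬ p i} → ℝ) → ℝ≥0∞ := fun w =>
    dens (fun i : {i // p i} => a i) w.1 * (φ₁ w.1 * (dens (fun i : {i // ¬ p i} => a i) w.2 *
      (powPos b (1 - (∑ i, w.1 i) - ∑ i, w.2 i) * φ₂ w.2))) with hH
  have hHm : Measurable H := by
    simp only [hH]
    fun_prop
  have h : ∀ y : ι → ℝ, dens a y * (powPos b (1 - ∑ i, y i) *
      (φ₁ (fun i => y i) * φ₂ (fun i => y i))) =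
      H (MeasurableEquiv.piEquivPiSubtypeProd (fun _ : ι => ℝ) p y) := by
    intro y
    have e : MeasurableEquiv.piEquivPiSubtypeProd (fun _ : ι => ℝ) p y =
      (fun i : {i // p i} => y i, fun i : {i // ¬ p i} => y i) := rfl
    simp only [hH, e, dens]
    rw [← Fintype.prod_subtype_mul_prod_subtype p, ← Fintype.sum_subtype_add_sum_subtype p,
      sub_sub]
    ring
  simp_rw [h]
  rw [hmp.lintegral_comp hHm, Measure.volume_eq_prod, lintegral_prod _ hHm.aemeasurable]
  refine lintegral_congr fun x => ?_
  simp only [hH]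
  rw [lintegral_const_mul _ (by fun_prop), lintegral_const_mul _ (by fun_prop)]

/-- Independence of the sum `s` of the coordinates satisfying `p`, of their direction, and of the
rescaled remaining coordinates, with `s` distributed as a Beta variable, in unnormalized form. -/
lemma lintegral_factor (p : ι → Prop) [DecidablePred p] [Nonempty {i // p i}] (a : ι → ℝ) (b : ℝ)
    (ha : ∀ i, 0 < a i)
    (φ₁ : ({i // p i} → ℝ) → ℝ≥0∞) (φ₂ : ({i // ¬ p i} → ℝ) → ℝ≥0∞)
    (h₁ : Measurable φ₁) (h₂ : Measurable φ₂) :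
    ENNReal.ofReal (Real.Gamma (∑ i : {i // p i}, a i)) *
    ∫⁻ y, dens a y * (powPos b (1 - ∑ i, y i) * (φ₁ (fun i => y i) * φ₂ (fun i => y i))) =
      ∫⁻ s, (powPos (∑ i : {i // p i}, a i) s * powPos ((∑ i : {i // ¬ p i}, a i) + b) (1 - s)) *
        ((∫⁻ x, dens (fun i : {i // p i} => a i) x *
          (ENNReal.ofReal (Real.exp (-∑ i, x i)) * φ₁ ((s / ∑ i, x i) • x))) *
        ∫⁻ z, dens (fun i : {i // ¬ p i} => a i) z *
          (powPos b (1 - ∑ i, z i) * φ₂ ((1 - s) • z))) := by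
  rw [lintegral_split p a b φ₁ φ₂ h₁ h₂, polar (fun i : {i // p i} => a i) (fun i => ha i) _
    (by fun_prop)]
  refine lintegral_congr fun s => ?_
  rw [mul_assoc, mul_left_comm (powPos _ (1 - s)), ← lintegral_slice _ _ _ _ h₂,
    ← lintegral_mul_const _ (by fun_prop)]
  congr 1
  simp_rw [mul_assoc]
  refine lintegral_dens_congr fun y hy => ?_
  rw [sum_div_smul hy]

/-- Unnormalized negative association for functions of complementary sets of coordinates. -/
lemma na_lintegral (p : ι → Prop) [DecidablePred p] [Nonempty {i // p i}] (a : ι → ℝ) (b : ℝ)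
    (ha : ∀ i, 0 < a i)
    (φ₁ : ({i // p i} → ℝ) → ℝ≥0∞) (φ₂ : ({i // ¬ p i} → ℝ) → ℝ≥0∞)
    (h₁ : Measurable φ₁) (h₂ : Measurable φ₂) (hm₁ : Monotone φ₁) (hm₂ : Monotone φ₂) :
    (∫⁻ y, dens a y * powPos b (1 - ∑ i, y i)) *
      (∫⁻ y, dens a y * (powPos b (1 - ∑ i, y i) * (φ₁ (fun i => y i) * φ₂ (fun i => y i)))) ≤
    (∫⁻ y, dens a y * (powPos b (1 - ∑ i, y i) * φ₁ (fun i => y i))) *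
      (∫⁻ y, dens a y * (powPos b (1 - ∑ i, y i) * φ₂ (fun i => y i))) := by
  have hΓ : 0 < Real.Gamma (∑ i : {i // p i}, a i) :=
    Real.Gamma_pos_of_pos (Finset.sum_pos (fun i _ => ha i) Finset.univ_nonempty)
  have f11 := lintegral_factor p a b ha (fun _ => 1) (fun _ => 1) measurable_const measurable_const
  have f12 := lintegral_factor p a b ha φ₁ φ₂ h₁ h₂
  have f1 := lintegral_factor p a b ha φ₁ (fun _ => 1) h₁ measurable_const
  have f2 := lintegral_factor p a b ha (fun _ => 1) φ₂ measurable_const h₂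
  simp only [mul_one, one_mul] at f11 f1 f2
  set c := ENNReal.ofReal (Real.Gamma (∑ i : {i // p i}, a i)) with hc
  have hc0 : c ≠ 0 := (ENNReal.ofReal_pos.2 hΓ).ne'
  have hct : c ≠ ⊤ := ENNReal.ofReal_ne_top
  set k : ℝ → ℝ≥0∞ := fun s =>
    powPos (∑ i : {i // p i}, a i) s * powPos ((∑ i : {i // ¬ p i}, a i) + b) (1 - s) with hk
  set U : ℝ → ℝ≥0∞ := fun s => ∫⁻ x, dens (fun i : {i // p i} => a i) x *
          (ENNReal.ofReal (Real.exp (-∑ i, x i)) * φ₁ ((s / ∑ i, x i) • x)) with hU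
  set V : ℝ → ℝ≥0∞ := fun s => ∫⁻ z, dens (fun i : {i // ¬ p i} => a i) z *
          (powPos b (1 - ∑ i, z i) * φ₂ ((1 - s) • z)) with hV
  have hkm : Measurable k := by simp only [hk]; fun_prop
  have hUm : Measurable U := by simp only [hU]; fun_prop
  have hVm : Measurable V := by simp only [hV]; fun_prop
  have hUmono : Monotone U := by
    intro s t hst
    refine lintegral_mono fun x => ?_
    by_cases hx : ∀ i, 0 < x i
    · have hs : 0 ≤ ∑ i, x i := Finset.sum_nonneg fun i _ => (hx i).le
      gcongr
      refine hm₁ fun i => ?_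
      have := (hx i).le
      simp only [Pi.smul_apply, smul_eq_mul]
      gcongr
    · simp [dens_eq_zero hx]
  have hVanti : Antitone V := by
    intro s t hst
    refine lintegral_mono fun x => ?_
    by_cases hx : ∀ i, 0 < x i
    · gcongr
      refine hm₂ fun i => ?_
      have := (hx i).le
      simp only [Pi.smul_apply, smul_eq_mul]
      gcongr
    · simp [dens_eq_zero hx]
  -- Chebyshev under the unnormalized Beta law of `s`, whose density is `k`.
  have cheb := chebyshev (volume.withDensity k) U V hUm hVm hUmono hVanti
  rw [lintegral_withDensity_eq_lintegral_mul _ hkm (by fun_prop),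
    lintegral_withDensity_eq_lintegral_mul _ hkm (by fun_prop),
    lintegral_withDensity_eq_lintegral_mul _ hkm (by fun_prop),
    withDensity_apply _ MeasurableSet.univ, Measure.restrict_univ] at cheb
  simp only [Pi.mul_apply] at cheb
  set P := ∫⁻ x, dens (fun i : {i // p i} => a i) x * ENNReal.ofReal (Real.exp (-∑ i, x i)) with hP
  set Q := ∫⁻ z, dens (fun i : {i // ¬ p i} => a i) z * powPos b (1 - ∑ i, z i) with hQ
  have g11 : c * ∫⁻ y, dens a y * powPos b (1 - ∑ i, y i) = (∫⁻ s, k s) * (P * Q) := by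
    rw [f11, ← lintegral_mul_const _ hkm]
  have g1 : c * ∫⁻ y, dens a y * (powPos b (1 - ∑ i, y i) * φ₁ (fun i => y i)) =
      (∫⁻ s, k s * U s) * Q := by
    rw [f1, ← lintegral_mul_const _ (by fun_prop)]
    refine lintegral_congr fun s => (mul_assoc _ _ _).symm
  have g2 : c * ∫⁻ y, dens a y * (powPos b (1 - ∑ i, y i) * φ₂ (fun i => y i)) =
      P * ∫⁻ s, k s * V s := by
    rw [f2, ← lintegral_const_mul _ (by fun_prop)]
    refine lintegral_congr fun s => mul_left_comm _ _ _
  -- `P` and `Q` are the (constant) values of `U` and `V` for the function `1`, so they appear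
  -- once each on both sides and need not be finite.
  refine (ENNReal.mul_le_mul_iff_right (mul_ne_zero hc0 hc0) (ENNReal.mul_ne_top hct hct)).1 ?_
  rw [mul_mul_mul_comm c c, mul_mul_mul_comm c c, g11, g1, g2, f12]
  calc _ = P * Q * ((∫⁻ s, k s) * ∫⁻ s, k s * (U s * V s)) := by ring
    _ ≤ P * Q * ((∫⁻ s, k s * U s) * ∫⁻ s, k s * V s) := by gcongr
    _ = _ := by ring

end

/-! ### The Dirichlet distribution -/

/-- The normalizing constant of the Dirichlet density. -/
def dirConst (n : ℕ) (a : Fin n → ℝ) (b : ℝ) : ℝ :=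
  Real.Gamma ((∑ i, a i) + b) / ((∏ i, Real.Gamma (a i)) * Real.Gamma b)

lemma dirConst_pos {n : ℕ} {a : Fin n → ℝ} {b : ℝ} (ha : ∀ i, 0 < a i) (hb : 0 < b) :
    0 < dirConst n a b := by
  have h1 : 0 < Real.Gamma ((∑ i, a i) + b) :=
    Real.Gamma_pos_of_pos (add_pos_of_nonneg_of_pos (Finset.sum_nonneg fun i _ => (ha i).le) hb)
  have h2 : 0 < ∏ i, Real.Gamma (a i) :=
    Finset.prod_pos fun i _ => Real.Gamma_pos_of_pos (ha i)
  have h3 := Real.Gamma_pos_of_pos hb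
  unfold dirConst
  positivity

lemma lintegral_dirichletLt {n : ℕ} {a : Fin n → ℝ} {b : ℝ} (ha : ∀ i, 0 < a i) (hb : 0 < b)
    (g : (Fin n → ℝ) → ℝ≥0∞) (hg : Measurable g) :
    ∫⁻ y, g y ∂(dirichletLt n a b) = ENNReal.ofReal (dirConst n a b) *
      ∫⁻ y, dens a y * (powPos b (1 - ∑ i, y i) * g y) := by
  have hK := dirConst_pos ha hb
  have h : (simplexLt n).indicator (fun y =>
    ENNReal.ofReal (Real.Gamma ((∑ i, a i) + b) / ((∏ i, Real.Gamma (a i)) * Real.Gamma b) *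
      (∏ i, y i ^ (a i - 1)) * (1 - ∑ i, y i) ^ (b - 1))) =
      fun y => ENNReal.ofReal (dirConst n a b) * (dens a y * powPos b (1 - ∑ i, y i)) := by
    funext y
    by_cases hy : ∀ i, 0 < y i
    · rcases le_or_gt (1 - ∑ i, y i) 0 with h1 | h1
      · rw [powPos_of_nonpos h1, mul_zero, mul_zero, indicator_of_notMem]
        intro hmem
        exact absurd hmem.2 (by linarith)
      · rw [indicator_of_mem (show y ∈ simplexLt n from ⟨hy, by linarith⟩), powPos_of_pos h1]
        change ENNReal.ofReal (dirConst n a b * _ * _) = _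
        rw [mul_assoc, ENNReal.ofReal_mul hK.le, ENNReal.ofReal_mul
            (Finset.prod_nonneg fun i _ => Real.rpow_nonneg (hy i).le _),
          ENNReal.ofReal_prod_of_nonneg (fun i _ => Real.rpow_nonneg (hy i).le _), dens,
          Finset.prod_congr rfl fun i _ => powPos_of_pos (α := a i) (hy i)]
    · rw [dens_eq_zero hy, zero_mul, mul_zero, indicator_of_notMem fun hmem => hy hmem.1]
  rw [dirichletLt, h, lintegral_withDensity_eq_lintegral_mul _ (by fun_prop) hg,
    ← lintegral_const_mul _ (by fun_prop)]
  refine lintegral_congr fun y => ?_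
  simp only [Pi.mul_apply]
  ring

lemma isProbabilityMeasure_dirichletLt {n : ℕ} (hn : 1 ≤ n) {a : Fin n → ℝ} {b : ℝ}
    (ha : ∀ i, 0 < a i) (hb : 0 < b) : IsProbabilityMeasure (dirichletLt n a b) := by
  have : Nonempty (Fin n) := ⟨⟨0, hn⟩⟩
  constructor
  rw [← lintegral_one, lintegral_dirichletLt ha hb _ measurable_const]
  have hK := dirConst_pos ha hb
  simp only [mul_one]
  rw [lintegral_dens_powPos a ha hb, ← ENNReal.ofReal_mul hK.le, ← ENNReal.ofReal_one]
  congr 1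
  unfold dirConst at hK ⊢
  rw [← inv_div, inv_mul_cancel₀]
  rw [← inv_div]
  exact (inv_pos.2 hK).ne'

lemma na_dirichlet_lintegral {n : ℕ} (hn : 1 ≤ n) {a : Fin n → ℝ} {b : ℝ}
    (ha : ∀ i, 0 < a i) (hb : 0 < b) (A₁ A₂ : Set (Fin n)) (hdisj : Disjoint A₁ A₂)
    (hne : A₁.Nonempty)
    (g₁ g₂ : (Fin n → ℝ) → ℝ≥0∞) (hmeas₁ : Measurable g₁) (hmeas₂ : Measurable g₂)
    (hmono₁ : Monotone g₁) (hmono₂ : Monotone g₂)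
    (hdep₁ : ∀ x y : Fin n → ℝ, (∀ i ∈ A₁, x i = y i) → g₁ x = g₁ y)
    (hdep₂ : ∀ x y : Fin n → ℝ, (∀ i ∈ A₂, x i = y i) → g₂ x = g₂ y) :
    ∫⁻ x, g₁ x * g₂ x ∂(dirichletLt n a b) ≤
      (∫⁻ x, g₁ x ∂(dirichletLt n a b)) * ∫⁻ x, g₂ x ∂(dirichletLt n a b) := by
  classical
  have hP := isProbabilityMeasure_dirichletLt hn ha hb
  set p : Fin n → Prop := fun i => i ∈ A₁ with hp
  have : Nonempty {i // p i} := hne.to_subtype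
  -- Extension by `0` turns `g₁` and `g₂` into functions of the coordinates in `A₁` and in its
  -- complement, which contains `A₂`.
  set ext₁ : ({i // p i} → ℝ) → (Fin n → ℝ) := fun x i => if h : p i then x ⟨i, h⟩ else 0
    with hext₁
  set ext₂ : ({i // ¬ p i} → ℝ) → (Fin n → ℝ) := fun x i => if h : ¬ p i then x ⟨i, h⟩ else 0
    with hext₂
  have hm₁ : Measurable ext₁ := by
    refine measurable_pi_lambda _ fun i => ?_
    by_cases h : p i
    · simp only [hext₁, h, dite_true]; fun_prop
    · simp only [hext₁, h, dite_false]; fun_prop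
  have hm₂ : Measurable ext₂ := by
    refine measurable_pi_lambda _ fun i => ?_
    by_cases h : p i
    · simp only [hext₂, h, not_true_eq_false, dite_false]; fun_prop
    · simp only [hext₂, h, not_false_eq_true, dite_true]; fun_prop
  have hmo₁ : Monotone ext₁ := by
    intro x y hxy i
    simp only [hext₁]
    split_ifs
    exacts [hxy _, le_rfl]
  have hmo₂ : Monotone ext₂ := by
    intro x y hxy i
    simp only [hext₂]
    split_ifs
    exacts [le_rfl, hxy _]
  have e₁ : ∀ y : Fin n → ℝ, (g₁ ∘ ext₁) (fun i : {i // p i} => y i) = g₁ y := by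
    intro y
    refine hdep₁ _ _ fun i hi => ?_
    simp [hext₁, hp, hi]
  have e₂ : ∀ y : Fin n → ℝ, (g₂ ∘ ext₂) (fun i : {i // ¬ p i} => y i) = g₂ y := by
    intro y
    refine hdep₂ _ _ fun i hi => ?_
    have : i ∉ A₁ := fun h => (Set.disjoint_left.1 hdisj h hi)
    simp [hext₂, hp, this]
  have key := na_lintegral p a b ha (g₁ ∘ ext₁) (g₂ ∘ ext₂) (hmeas₁.comp hm₁) (hmeas₂.comp hm₂)
    (hmono₁.comp hmo₁) (hmono₂.comp hmo₂)
  simp only [e₁, e₂] at key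
  have h1 : ENNReal.ofReal (dirConst n a b) *
      ∫⁻ y, dens a y * powPos b (1 - ∑ i, y i) = 1 := by
    have := lintegral_dirichletLt ha hb (fun _ => 1) measurable_const
    simpa using this.symm
  rw [lintegral_dirichletLt ha hb _ (by fun_prop), lintegral_dirichletLt ha hb _ hmeas₁,
    lintegral_dirichletLt ha hb _ hmeas₂, ← one_mul (ENNReal.ofReal (dirConst n a b) * _), ← h1,
    mul_mul_mul_comm, mul_mul_mul_comm (ENNReal.ofReal _) _ (ENNReal.ofReal _)
      (∫⁻ y, dens a y * (powPos b (1 - ∑ i, y i) * g₂ y))]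
  exact mul_le_mul' le_rfl key

/-- Negative association of the coordinates of a Dirichlet vector: for disjoint
index sets `A₁, A₂` and bounded measurable coordinatewise nondecreasing functions
`f₁` (depending only on coordinates in `A₁`) and `f₂` (depending only on coordinates
in `A₂`), `Cov(f₁(ξ), f₂(ξ)) ≤ 0`, i.e. `E[f₁ f₂] ≤ E[f₁] E[f₂]`. -/
theorem statement11 (n : ℕ) (hn : 1 ≤ n) (a : Fin n → ℝ) (b : ℝ)
    (ha : ∀ i, 0 < a i) (hb : 0 < b)
    (A₁ A₂ : Set (Fin n)) (hdisj : Disjoint A₁ A₂)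
    (f₁ f₂ : (Fin n → ℝ) → ℝ)
    (hmeas₁ : Measurable f₁) (hmeas₂ : Measurable f₂)
    (hbdd₁ : ∃ M, ∀ x, |f₁ x| ≤ M) (hbdd₂ : ∃ M, ∀ x, |f₂ x| ≤ M)
    (hmono₁ : Monotone f₁) (hmono₂ : Monotone f₂)
    (hdep₁ : ∀ x y : Fin n → ℝ, (∀ i ∈ A₁, x i = y i) → f₁ x = f₁ y)
    (hdep₂ : ∀ x y : Fin n → ℝ, (∀ i ∈ A₂, x i = y i) → f₂ x = f₂ y) :
    ∫ x, f₁ x * f₂ x ∂(dirichletLt n a b) ≤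
      (∫ x, f₁ x ∂(dirichletLt n a b)) * ∫ x, f₂ x ∂(dirichletLt n a b) := by
  have hP := isProbabilityMeasure_dirichletLt hn ha hb
  rcases A₁.eq_empty_or_nonempty with hA | hne
  · have hc : ∀ x, f₁ x = f₁ 0 := fun x => hdep₁ _ _ (by simp [hA])
    simp_rw [hc]
    rw [integral_const_mul]
    simp
  obtain ⟨M₁, hM₁⟩ := hbdd₁
  obtain ⟨M₂, hM₂⟩ := hbdd₂
  have p₁ : ∀ x, 0 ≤ f₁ x + M₁ := fun x => by linarith [neg_le_of_abs_le (hM₁ x)]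
  have p₂ : ∀ x, 0 ≤ f₂ x + M₂ := fun x => by linarith [neg_le_of_abs_le (hM₂ x)]
  set μ := dirichletLt n a b with hμ
  have i₁ : Integrable f₁ μ := .of_bound hmeas₁.aestronglyMeasurable M₁ (.of_forall hM₁)
  have i₂ : Integrable f₂ μ := .of_bound hmeas₂.aestronglyMeasurable M₂ (.of_forall hM₂)
  have i₁₂ : Integrable (fun x => f₁ x * f₂ x) μ :=
    i₂.bdd_mul hmeas₁.aestronglyMeasurable (.of_forall hM₁)
  have key := na_dirichlet_lintegral hn ha hb A₁ A₂ hdisj hne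
    (fun x => ENNReal.ofReal (f₁ x + M₁)) (fun x => ENNReal.ofReal (f₂ x + M₂))
    (by fun_prop) (by fun_prop)
    (fun x y h => ENNReal.ofReal_le_ofReal (by linarith [hmono₁ h]))
    (fun x y h => ENNReal.ofReal_le_ofReal (by linarith [hmono₂ h]))
    (fun x y h => by rw [hdep₁ x y h]) (fun x y h => by rw [hdep₂ x y h])
  have j₁ : Integrable (fun x => f₁ x + M₁) μ := i₁.add (integrable_const _)
  have j₂ : Integrable (fun x => f₂ x + M₂) μ := i₂.add (integrable_const _)
  have expand : ∀ x, (f₁ x + M₁) * (f₂ x + M₂) = f₁ x * f₂ x + (M₂ * f₁ x + (M₁ * f₂ x + M₁ * M₂)) :=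
    fun x => by ring
  have j₄ : Integrable (fun x => M₁ * f₂ x + M₁ * M₂) μ := (i₂.const_mul _).add (integrable_const _)
  have j₃ : Integrable (fun x => M₂ * f₁ x + (M₁ * f₂ x + M₁ * M₂)) μ := (i₁.const_mul _).add j₄
  have j₁₂ : Integrable (fun x => (f₁ x + M₁) * (f₂ x + M₂)) μ := by
    simp_rw [expand]
    exact i₁₂.add j₃
  simp_rw [← ENNReal.ofReal_mul (p₁ _)] at key
  rw [← ofReal_integral_eq_lintegral_ofReal j₁ (.of_forall p₁),
    ← ofReal_integral_eq_lintegral_ofReal j₂ (.of_forall p₂),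
    ← ofReal_integral_eq_lintegral_ofReal j₁₂ (.of_forall fun x => mul_nonneg (p₁ x) (p₂ x)),
    ← ENNReal.ofReal_mul (integral_nonneg p₁),
    ENNReal.ofReal_le_ofReal_iff (mul_nonneg (integral_nonneg p₁) (integral_nonneg p₂))] at key
  simp_rw [expand] at key
  rw [integral_add i₁₂ j₃, integral_add (i₁.const_mul _) j₄,
    integral_add (i₂.const_mul _) (integrable_const _), integral_add i₁ (integrable_const _),
    integral_add i₂ (integrable_const _), integral_const_mul, integral_const_mul] at key
  simp only [integral_const, probReal_univ, one_smul] at key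
  nlinarith [key]

end
end

section
/- Let N ≥ 1, 1 ≤ p < ∞, and a_1,…,a_N > 0. Let (ξ_1,…,ξ_N) have the Dirichlet distribution Dir(a_1,…,a_N) on the simplex 𝒮_N = {x_i > 0, ∑ x_i = 1}, let ε_1,…,ε_N be independent Rademacher variables independent of ξ, and set X_i = ε_i ξ_i^{1/p}, so that X = (X_1,…,X_N) lies on the sphere ∂𝔹_{N,p} and has density proportional to ∏_j |x_j|^{p a_j - 1} with respect to the cone measure. Then the random variables |X_1|, …, |X_N| are negatively associated: Cov(f_1(|X_i|, i ∈ A_1), f_2(|X_j|, j ∈ A_2)) ≤ 0 for all disjoint A_1, A_2 ⊂ {1,…,N} and all coordinatewise nondecreasing bounded measurable f_1, f_2. -/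
/-!
Since `|ε_i ξ_i^{1/p}| = |ξ_i^{1/p}|` almost surely, and `t ↦ t^{1/p}` is nondecreasing on
`[0, ∞)`, it suffices to show that the coordinates of a Dirichlet vector `ξ` are negatively
associated (`dirichlet_negAssoc`). For a set `A` of indices with `A` and `Aᶜ` nonempty, `ξ` splits
as `ξ_A = T • η`, `ξ_{Aᶜ} = (1 - T) • ζ` with `T ∈ (0, 1)`, `η ≥ 0`, `ζ ≥ 0` independent
(`dirichlet_split`). Averaging over `η` and `ζ` turns `E[f₁(ξ) f₂(ξ)]` into `E[F(T) G(T)]` with `F`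
nondecreasing and `G` nonincreasing, and Chebyshev's association inequality
(`integral_mul_le_of_antivary`) concludes. No log-concavity is involved, so all `a_i > 0` are
allowed.

The splitting comes from the gamma representation: if the `g_i ∼ Γ(a_i, 1)` are independent with
sum `S`, then `S` and `g / S` are independent, `S ∼ Γ(∑ a_i, 1)` and `g / S` is Dirichlet
(`gamma_dirichlet_map`). It is applied to the whole vector and, after reindexing
(`exists_dirichlet`), to the two blocks `g_A` and `g_{Aᶜ}`, with `T = S_A / (S_A + S_{Aᶜ})`. The
change of variables behind it consists of a translation of the last coordinate, Tonelli, and a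
dilation by `s` of the other `n` coordinates. It also shows that the explicit Dirichlet density has
total mass one, so the beta and Dirichlet integrals are not needed separately.
-/

open MeasureTheory Filter Set
open scoped ENNReal Topology

noncomputable section

/-- The Dirichlet distribution `Dir(a_1,…,a_{n+1})` on the simplex
`𝒮_{n+1} = {x_i > 0, ∑ x_i = 1}`, realized as the image of
`Dir_n(a_1,…,a_n; a_{n+1})` under `y ↦ (y, 1 - ∑ y)`. -/
def dirichletSimplex (n : ℕ) (a : Fin (n + 1) → ℝ) : Measure (Fin (n + 1) → ℝ) :=
  (dirichletLt n (fun i => a i.castSucc) (a (Fin.last n))).map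
    (fun y => Fin.snoc y (1 - ∑ i, y i))

/-- The Rademacher distribution on `ℝ`: `±1` with probability `1/2` each. -/
def rademacher : Measure ℝ :=
  (2 : ℝ≥0∞)⁻¹ • Measure.dirac (-1 : ℝ) + (2 : ℝ≥0∞)⁻¹ • Measure.dirac (1 : ℝ)

/-- The law on the sphere `∂𝔹_{N,p}` of `X_i = ε_i ξ_i^{1/p}` where
`ξ ∼ Dir(a_1,…,a_N)` and the `ε_i` are independent Rademacher signs. -/
def sphereLaw (n : ℕ) (p : ℝ) (a : Fin (n + 1) → ℝ) : Measure (Fin (n + 1) → ℝ) :=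
  ((dirichletSimplex n a).prod (Measure.pi fun _ : Fin (n + 1) => rademacher)).map
    (fun q => fun i => q.2 i * q.1 i ^ (1 / p))

/-! ### Product measures with densities -/

theorem lintegral_fin_prod (n : ℕ) (f : Fin n → ℝ → ℝ≥0∞) (hf : ∀ i, Measurable (f i)) :
    ∫⁻ x : Fin n → ℝ, ∏ i, f i (x i) = ∏ i, ∫⁻ t, f i t := by
  induction n with
  | zero => simp [Measure.volume_pi_eq_dirac (0 : Fin 0 → ℝ)]
  | succ n ih =>
    rw [← ((volume_preserving_piFinSuccAbove (fun _ : Fin (n + 1) => ℝ) 0).symm).lintegral_comp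
      (by fun_prop)]
    simp only [MeasurableEquiv.piFinSuccAbove_symm_apply, Fin.insertNthEquiv,
      Fin.prod_univ_succ, Fin.insertNth_zero, Equiv.coe_fn_mk, Fin.cons_zero, Fin.cons_succ]
    have hg : Measurable fun y : Fin n → ℝ => ∏ i, f (Fin.succ i) (y i) :=
      Finset.measurable_fun_prod _ fun i _ => (hf _).comp (measurable_pi_apply i)
    exact (lintegral_prod_mul (hf 0).aemeasurable hg.aemeasurable).trans
      (by rw [← ih _ fun i => hf _])

theorem pi_withDensity_fin (n : ℕ) (f : Fin n → ℝ → ℝ≥0∞) (hf : ∀ i, Measurable (f i))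
    [∀ i, SigmaFinite ((volume : Measure ℝ).withDensity (f i))] :
    Measure.pi (fun i => (volume : Measure ℝ).withDensity (f i)) =
      (volume : Measure (Fin n → ℝ)).withDensity fun x => ∏ i, f i (x i) := by
  refine Measure.pi_eq fun s hs => ?_
  rw [withDensity_apply _ (MeasurableSet.univ_pi hs),
    ← lintegral_indicator (MeasurableSet.univ_pi hs)]
  have : (Set.univ.pi s).indicator (fun x : Fin n → ℝ => ∏ i, f i (x i)) =
      fun x => ∏ i, (s i).indicator (f i) (x i) := by
    ext x
    by_cases hx : x ∈ Set.univ.pi s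
    · rw [indicator_of_mem hx]
      exact Finset.prod_congr rfl fun i _ => (indicator_of_mem (hx i (mem_univ i)) _).symm
    · rw [indicator_of_notMem hx]
      obtain ⟨i, hi⟩ : ∃ i, x i ∉ s i := by simpa [Set.mem_pi] using hx
      exact (Finset.prod_eq_zero (Finset.mem_univ i) (indicator_of_notMem hi _)).symm
  rw [this, lintegral_fin_prod n (fun i => (s i).indicator (f i)) fun i => (hf i).indicator (hs i)]
  exact Finset.prod_congr rfl fun i _ => by
    rw [withDensity_apply _ (hs i), lintegral_indicator (hs i)]

/-! ### Gamma and Dirichlet densities -/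

/-- The density of `Γ(a, 1)`, supported on the open half-line. Unlike `gammaPDF` it vanishes at `0`,
so that the pointwise identity `dens_identity` has no exceptional boundary points. -/
def gammaDens (a : ℝ) : ℝ → ℝ≥0∞ :=
  (Ioi 0).indicator fun x => ENNReal.ofReal (1 / Real.Gamma a * x ^ (a - 1) * Real.exp (-x))

theorem measurable_gammaDens (a : ℝ) : Measurable (gammaDens a) := by
  unfold gammaDens
  exact Measurable.indicator (by fun_prop) measurableSet_Ioi

theorem gammaMeasure_eq (a : ℝ) :
    ProbabilityTheory.gammaMeasure a 1 = volume.withDensity (gammaDens a) := by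
  refine withDensity_congr_ae ?_
  have h0 : ∀ᵐ x : ℝ, x ≠ 0 := by simp [ae_iff, measure_singleton]
  filter_upwards [h0] with x hx
  rcases lt_or_gt_of_ne hx with h | h
  · rw [ProbabilityTheory.gammaPDF_of_neg h, gammaDens, indicator_of_notMem (by simpa using h.le)]
  · rw [ProbabilityTheory.gammaPDF_of_nonneg h.le, gammaDens, indicator_of_mem (by simpa using h)]
    simp

/-- The density of the first `n` coordinates of `Dir(a_1,…,a_{n+1})`. -/
def dirDens (n : ℕ) (a : Fin (n + 1) → ℝ) : (Fin n → ℝ) → ℝ≥0∞ :=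
  (simplexLt n).indicator fun y =>
    ENNReal.ofReal (Real.Gamma ((∑ i : Fin n, a i.castSucc) + a (Fin.last n)) /
        ((∏ i : Fin n, Real.Gamma (a i.castSucc)) * Real.Gamma (a (Fin.last n))) *
      (∏ i, y i ^ (a i.castSucc - 1)) * (1 - ∑ i, y i) ^ (a (Fin.last n) - 1))

/-- The parametrization `y ↦ (y, 1 - ∑ y)` of the hyperplane `∑ x_i = 1`. -/
def simplexMap (n : ℕ) (y : Fin n → ℝ) : Fin (n + 1) → ℝ := Fin.snoc y (1 - ∑ i, y i)

theorem measurableSet_simplexLt (n : ℕ) : MeasurableSet (simplexLt n) := by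
  unfold simplexLt
  refine MeasurableSet.inter (s₁ := {y : Fin n → ℝ | ∀ i, 0 < y i}) ?_ ?_
  · simp only [ofPred_forall]
    exact MeasurableSet.iInter fun i => measurableSet_lt measurable_const (measurable_pi_apply i)
  · exact measurableSet_lt (f := fun y : Fin n → ℝ => ∑ i, y i) (by fun_prop) measurable_const

theorem measurable_dirDens (n : ℕ) (a : Fin (n + 1) → ℝ) : Measurable (dirDens n a) := by
  unfold dirDens
  exact Measurable.indicator (by fun_prop) (measurableSet_simplexLt n)

theorem measurable_snoc (n : ℕ) :
    Measurable fun q : (Fin n → ℝ) × ℝ => (Fin.snoc q.1 q.2 : Fin (n + 1) → ℝ) := by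
  refine measurable_pi_lambda _ fun i => ?_
  refine Fin.lastCases ?_ (fun j => ?_) i
  · simpa using measurable_snd
  · simpa [Function.comp_def] using (measurable_pi_apply j).comp measurable_fst

theorem measurable_simplexMap (n : ℕ) : Measurable (simplexMap n) :=
  (measurable_snoc n).comp (f := fun y : Fin n → ℝ => (y, 1 - ∑ i, y i)) (by fun_prop)

theorem dirichletSimplex_eq (n : ℕ) (a : Fin (n + 1) → ℝ) :
    dirichletSimplex n a = (volume.withDensity (dirDens n a)).map (simplexMap n) := rfl

theorem snoc_scale (n : ℕ) (s : ℝ) (y : Fin n → ℝ) :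
    (Fin.snoc (s • y) (s - ∑ i, (s • y) i) : Fin (n + 1) → ℝ) = s • simplexMap n y := by
  ext i
  refine Fin.lastCases ?_ (fun j => ?_) i
  · simp [simplexMap, ← Finset.mul_sum]; ring
  · simp [simplexMap]

theorem sum_simplexMap (n : ℕ) (y : Fin n → ℝ) : ∑ i, simplexMap n y i = 1 := by
  simp [simplexMap, Fin.sum_univ_castSucc]

theorem simplexMap_pos {n : ℕ} {y : Fin n → ℝ} (hy : y ∈ simplexLt n) (i : Fin (n + 1)) :
    0 < simplexMap n y i := by
  refine Fin.lastCases ?_ (fun j => ?_) i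
  · simpa [simplexMap] using hy.2
  · simpa [simplexMap] using hy.1 j

theorem exists_nonpos {n : ℕ} {y : Fin n → ℝ} (hy : y ∉ simplexLt n) :
    ∃ i, simplexMap n y i ≤ 0 := by
  by_contra! h
  refine hy ⟨fun j => ?_, ?_⟩
  · simpa [simplexMap] using h j.castSucc
  · simpa [simplexMap] using h (Fin.last n)

/-- Under `g = s • (y, 1 - ∑ y)`, whose Jacobian is `s ^ n`, the product of the gamma densities
factors into a gamma density in `s` and the Dirichlet density in `y`. -/
theorem dens_identity (n : ℕ) (a : Fin (n + 1) → ℝ) (ha : ∀ i, 0 < a i) {s : ℝ} (hs : 0 < s)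
    (y : Fin n → ℝ) :
    ENNReal.ofReal (s ^ n) * ∏ i, gammaDens (a i) ((s • simplexMap n y) i) =
      gammaDens (∑ i, a i) s * dirDens n a y := by
  by_cases hy : y ∈ simplexLt n
  · have hx := simplexMap_pos hy
    have hA : 0 < ∑ i, a i := Finset.sum_pos (fun i _ => ha i) ⟨0, Finset.mem_univ _⟩
    have hG : ∀ i, 0 < Real.Gamma (a i) := fun i => Real.Gamma_pos_of_pos (ha i)
    have hD : dirDens n a y = ENNReal.ofReal (Real.Gamma (∑ i, a i) *
        ∏ i, ((Real.Gamma (a i))⁻¹ * simplexMap n y i ^ (a i - 1))) := by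
      rw [dirDens, indicator_of_mem hy]
      congr 1
      rw [Finset.prod_mul_distrib, Finset.prod_inv_distrib, Fin.sum_univ_castSucc,
        Fin.prod_univ_castSucc, Fin.prod_univ_castSucc]
      simp only [simplexMap, Fin.snoc_castSucc, Fin.snoc_last]
      field_simp
    rw [hD, gammaDens, indicator_of_mem (by simpa using hs), ← ENNReal.ofReal_mul (by positivity)]
    have : ∀ i, gammaDens (a i) ((s • simplexMap n y) i) =
        ENNReal.ofReal (((Real.Gamma (a i))⁻¹ * simplexMap n y i ^ (a i - 1)) *
          (s ^ (a i - 1) * Real.exp (-(s * simplexMap n y i)))) := by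
      intro i
      rw [gammaDens, indicator_of_mem (by simpa using mul_pos hs (hx i))]
      simp only [Pi.smul_apply, smul_eq_mul]
      rw [Real.mul_rpow hs.le (hx i).le]
      congr 1; ring
    rw [Finset.prod_congr rfl fun i _ => this i, ← ENNReal.ofReal_prod_of_nonneg,
      ← ENNReal.ofReal_mul (by positivity)]
    · congr 1
      rw [Finset.prod_mul_distrib, Finset.prod_mul_distrib (f := fun i => s ^ (a i - 1)),
        ← Real.exp_sum, ← Real.rpow_sum_of_pos hs, Finset.sum_neg_distrib, ← Finset.mul_sum,
        sum_simplexMap, mul_one, Finset.sum_sub_distrib]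
      have e1 : s ^ (∑ i, a i - 1) = s ^ n * s ^ (∑ i, a i - ∑ i : Fin (n + 1), (1 : ℝ)) := by
        rw [← Real.rpow_natCast, ← Real.rpow_add hs]
        congr 1; simp; ring
      rw [e1]
      have := (Real.Gamma_pos_of_pos hA).ne'
      field_simp
    · intro i _
      have := hx i
      have := hG i
      positivity
  · obtain ⟨i, hi⟩ := exists_nonpos hy
    rw [dirDens, indicator_of_notMem hy, mul_zero, Finset.prod_eq_zero (Finset.mem_univ i), mul_zero]
    rw [gammaDens, indicator_of_notMem]
    simpa using mul_nonpos_of_nonneg_of_nonpos hs.le hi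

theorem lintegral_scale (n : ℕ) {s : ℝ} (hs : 0 < s) (K : (Fin n → ℝ) → ℝ≥0∞) :
    ∫⁻ y, K y = ENNReal.ofReal (s ^ n) * ∫⁻ y, K (s • y) := by
  have h := Measure.map_addHaar_smul (volume : Measure (Fin n → ℝ)) hs.ne'
  have e : ∫⁻ y, K (s • y) = ∫⁻ y, K y ∂(Measure.map (s • ·) (volume : Measure (Fin n → ℝ))) :=
    (lintegral_map_equiv K
      (Homeomorph.smul (isUnit_iff_ne_zero.2 hs.ne').unit).toMeasurableEquiv).symm
  rw [e, h, lintegral_smul_measure, smul_eq_mul, ← mul_assoc, ← ENNReal.ofReal_mul (by positivity)]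
  rw [Module.finrank_fin_fun, abs_of_pos (by positivity), mul_inv_cancel₀ (by positivity)]
  simp

/-! ### The gamma representation of the Dirichlet distribution -/

open ProbabilityTheory in
/-- The joint law of `S = ∑ g_i` and `g / S` for independent gamma variables `g_i`, tested against
a nonnegative function. Finiteness of `dirichletSimplex` is not presupposed, so `F = 1` gives its
total mass. -/
theorem gamma_dirichlet_lintegral (n : ℕ) (a : Fin (n + 1) → ℝ) (ha : ∀ i, 0 < a i)
    (F : ℝ × (Fin (n + 1) → ℝ) → ℝ≥0∞) (hF : Measurable F) :
    ∫⁻ g, F (∑ i, g i, (∑ i, g i)⁻¹ • g) ∂(Measure.pi fun i => gammaMeasure (a i) 1) =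
      ∫⁻ s, ∫⁻ x, F (s, x) ∂(dirichletSimplex n a) ∂(gammaMeasure (∑ i, a i) 1) := by
  have hm := fun i => measurable_gammaDens (a i)
  have : ∀ i, SigmaFinite ((volume : Measure ℝ).withDensity (gammaDens (a i))) := fun i => by
    rw [← gammaMeasure_eq]
    have := isProbabilityMeasure_gammaMeasure (ha i) one_pos
    infer_instance
  simp only [gammaMeasure_eq]
  rw [pi_withDensity_fin _ _ hm, lintegral_withDensity_eq_lintegral_mul _ (by fun_prop)
    (by fun_prop)]
  set H : (Fin (n + 1) → ℝ) → ℝ≥0∞ := fun g =>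
    (∏ i, gammaDens (a i) (g i)) * F (∑ i, g i, (∑ i, g i)⁻¹ • g) with hH
  have hHm : Measurable H := by fun_prop
  have hsn := measurable_snoc n
  have step1 : ∫⁻ g, H g = ∫⁻ y : Fin n → ℝ, ∫⁻ t : ℝ, H (Fin.snoc y t) := by
    rw [← ((volume_preserving_piFinSuccAbove (fun _ : Fin (n + 1) => ℝ) (Fin.last n)).symm).lintegral_comp
      hHm, Measure.volume_eq_prod]
    refine (lintegral_prod_symm _
        (hHm.comp (MeasurableEquiv.measurable _)).aemeasurable).trans ?_
    simp [MeasurableEquiv.piFinSuccAbove_symm_apply, Fin.insertNthEquiv, Fin.insertNth_last']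
  -- Translate the last coordinate so that `s` becomes the total sum.
  have step2 : ∀ y : Fin n → ℝ, ∫⁻ t : ℝ, H (Fin.snoc y t) =
      ∫⁻ s : ℝ, H (Fin.snoc y (s - ∑ i, y i)) := fun y =>
    (lintegral_sub_right_eq_self (fun t => H (Fin.snoc y t)) _).symm
  have hjoint : Measurable fun q : (Fin n → ℝ) × ℝ =>
      H (Fin.snoc q.1 (q.2 - ∑ i, q.1 i)) :=
    hHm.comp (hsn.comp (f := fun q : (Fin n → ℝ) × ℝ => (q.1, q.2 - ∑ i, q.1 i)) (by fun_prop))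
  have step3 : ∀ s : ℝ, ∫⁻ y : Fin n → ℝ, H (Fin.snoc y (s - ∑ i, y i)) =
      gammaDens (∑ i, a i) s * ∫⁻ y, dirDens n a y * F (s, simplexMap n y) := by
    intro s
    rcases le_or_gt s 0 with hs | hs
    -- If the total `s` is nonpositive, some coordinate is nonpositive and its density vanishes.
    · rw [gammaDens, indicator_of_notMem (by simpa using hs), zero_mul]
      refine (lintegral_congr fun y => ?_).trans lintegral_zero
      have hsum : ∑ i, (Fin.snoc y (s - ∑ i, y i) : Fin (n + 1) → ℝ) i = s := by
        simp [Fin.sum_univ_castSucc]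
      obtain ⟨i, hi⟩ : ∃ i, (Fin.snoc y (s - ∑ i, y i) : Fin (n + 1) → ℝ) i ≤ 0 := by
        by_contra! h
        have := Finset.sum_pos (fun i _ => h i) ⟨0, Finset.mem_univ (0 : Fin (n + 1))⟩
        linarith
      simp only [hH]
      rw [Finset.prod_eq_zero (Finset.mem_univ i), zero_mul]
      rw [gammaDens, indicator_of_notMem (by simpa using hi)]
    -- For `s > 0` rescale `y` by `s`.
    · rw [lintegral_scale n hs, ← lintegral_const_mul' _ _ ENNReal.ofReal_ne_top,
        ← lintegral_const_mul' _ _ (by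
          rw [gammaDens]; unfold indicator; split_ifs <;> simp)]
      refine lintegral_congr fun y => ?_
      rw [snoc_scale]
      have hsum : ∑ i, (s • simplexMap n y) i = s := by
        simp [← Finset.mul_sum, sum_simplexMap]
      simp only [hH]
      rw [hsum, smul_smul, inv_mul_cancel₀ hs.ne', one_smul, ← mul_assoc, ← mul_assoc,
        dens_identity n a ha hs]
  have hmap := measurable_simplexMap n
  have hdd := measurable_dirDens n a
  change ∫⁻ g, H g = _
  rw [step1, lintegral_congr step2, lintegral_lintegral_swap hjoint.aemeasurable,
    lintegral_congr step3]
  have hprob : SFinite (dirichletSimplex n a) := by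
    rw [dirichletSimplex_eq]; infer_instance
  rw [lintegral_withDensity_eq_lintegral_mul _ (measurable_gammaDens _)
    hF.lintegral_prod_right']
  refine lintegral_congr fun s => ?_
  simp only [Pi.mul_apply]
  rw [dirichletSimplex_eq, lintegral_map (by fun_prop) hmap,
    lintegral_withDensity_eq_lintegral_mul _ hdd (by fun_prop)]
  rfl

theorem isProbabilityMeasure_dirichletSimplex (n : ℕ) (a : Fin (n + 1) → ℝ) (ha : ∀ i, 0 < a i) :
    IsProbabilityMeasure (dirichletSimplex n a) := by
  have hA : 0 < ∑ i, a i := Finset.sum_pos (fun i _ => ha i) ⟨0, Finset.mem_univ _⟩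
  have := fun i => ProbabilityTheory.isProbabilityMeasure_gammaMeasure (ha i) one_pos
  have := ProbabilityTheory.isProbabilityMeasure_gammaMeasure hA one_pos
  have h := gamma_dirichlet_lintegral n a ha (fun _ => 1) measurable_const
  simp only [lintegral_const, measure_univ, mul_one, one_mul] at h
  exact ⟨h.symm⟩

/-- For independent `g_i ∼ Γ(a_i, 1)` the sum `S` is independent of `g / S`, and `g / S` is
Dirichlet distributed. -/
theorem gamma_dirichlet_map (n : ℕ) (a : Fin (n + 1) → ℝ) (ha : ∀ i, 0 < a i) :
    (Measure.pi fun i => ProbabilityTheory.gammaMeasure (a i) 1).map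
      (fun g => (∑ i, g i, (∑ i, g i)⁻¹ • g)) =
    (ProbabilityTheory.gammaMeasure (∑ i, a i) 1).prod (dirichletSimplex n a) := by
  have := isProbabilityMeasure_dirichletSimplex n a ha
  refine Measure.ext_of_lintegral _ fun F hF => ?_
  rw [lintegral_map hF (by fun_prop), gamma_dirichlet_lintegral n a ha F hF,
    lintegral_prod _ hF.aemeasurable]

theorem dirichletSimplex_nonneg (n : ℕ) (a : Fin (n + 1) → ℝ) :
    ∀ᵐ x ∂(dirichletSimplex n a), ∀ i, 0 ≤ x i := by
  have hm := measurable_simplexMap n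
  rw [dirichletSimplex_eq, ae_map_iff hm.aemeasurable, ae_withDensity_iff (measurable_dirDens n a)]
  · refine ae_of_all _ fun y hy i => (simplexMap_pos ?_ i).le
    by_contra h
    exact hy (indicator_of_notMem h _)
  · simp only [Set.ofPred_forall]
    exact MeasurableSet.iInter fun i => measurableSet_le measurable_const (measurable_pi_apply i)

/-- The gamma representation over an arbitrary nonempty finite index type, where `D` is the
reindexed Dirichlet distribution. -/
theorem exists_dirichlet {ι : Type} [Fintype ι] [Nonempty ι] (a : ι → ℝ) (ha : ∀ i, 0 < a i) :
    ∃ D : Measure (ι → ℝ), IsProbabilityMeasure D ∧ (∀ᵐ x ∂D, ∀ i, 0 ≤ x i) ∧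
      (Measure.pi fun i => ProbabilityTheory.gammaMeasure (a i) 1).map
        (fun g => (∑ i, g i, (∑ i, g i)⁻¹ • g)) =
      (ProbabilityTheory.gammaMeasure (∑ i, a i) 1).prod D := by
  obtain ⟨n, hn⟩ : ∃ n, Fintype.card ι = n + 1 :=
    Nat.exists_eq_succ_of_ne_zero Fintype.card_ne_zero
  let e : Fin (n + 1) ≃ ι := (finCongr hn.symm).trans (Fintype.equivFin ι).symm
  let L : (Fin (n + 1) → ℝ) → (ι → ℝ) := fun x i => x (e.symm i)
  have hL : Measurable L := measurable_pi_lambda _ fun i => measurable_pi_apply _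
  have hprob := isProbabilityMeasure_dirichletSimplex n (fun i => a (e i)) fun i => ha _
  have hA : 0 < ∑ i, a i := Finset.sum_pos (fun i _ => ha i) Finset.univ_nonempty
  have := fun i => ProbabilityTheory.isProbabilityMeasure_gammaMeasure (ha i) one_pos
  have := ProbabilityTheory.isProbabilityMeasure_gammaMeasure hA one_pos
  refine ⟨(dirichletSimplex n fun i => a (e i)).map L,
    Measure.isProbabilityMeasure_map hL.aemeasurable, ?_, ?_⟩
  · rw [ae_map_iff hL.aemeasurable]
    · filter_upwards [dirichletSimplex_nonneg n fun i => a (e i)] with x hx i using hx _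
    · simp only [Set.ofPred_forall]
      exact MeasurableSet.iInter fun i => measurableSet_le measurable_const (measurable_pi_apply i)
  · have hpi := Measure.pi_map_piCongrLeft e
      (fun i => ProbabilityTheory.gammaMeasure (a i) 1)
    have hLe : (MeasurableEquiv.piCongrLeft (fun _ : ι => ℝ) e : (Fin (n + 1) → ℝ) → ι → ℝ) = L := by
      ext x i
      obtain ⟨j, rfl⟩ := e.surjective i
      rw [MeasurableEquiv.coe_piCongrLeft, Equiv.piCongrLeft_apply_apply]
      simp [L]
    rw [hLe] at hpi
    have hg := gamma_dirichlet_map n (fun i => a (e i)) fun i => ha _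
    rw [e.sum_comp a] at hg
    rw [← hpi, Measure.map_map (by fun_prop) hL]
    have hid : (ProbabilityTheory.gammaMeasure (∑ i, a i) 1) =
      (ProbabilityTheory.gammaMeasure (∑ i, a i) 1).map id := Measure.map_id.symm
    rw [hid, Measure.map_prod_map _ _ measurable_id hL, ← hg,
      Measure.map_map (measurable_id.prodMap hL) (by fun_prop)]
    congr 1
    ext g : 1
    have hs : ∑ i, L g i = ∑ i, g i := e.symm.sum_comp g
    simp only [Function.comp_apply, Prod.map_apply, id, hs]
    rfl

/-! ### Chebyshev's association inequality -/

/-- The pointwise inequality `(F x - F y) * (G x - G y) ≤ 0` is integrated over two independent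
copies. -/
theorem integral_mul_le_of_antivary {μ : Measure ℝ} [IsProbabilityMeasure μ] {F G : ℝ → ℝ}
    (hF : Measurable F) (hG : Measurable G) {M K : ℝ} (hFb : ∀ x, |F x| ≤ M)
    (hGb : ∀ x, |G x| ≤ K) (hFm : Monotone F) (hGm : Antitone G) :
    ∫ x, F x * G x ∂μ ≤ (∫ x, F x ∂μ) * ∫ x, G x ∂μ := by
  have iF : Integrable F μ := .of_bound hF.aestronglyMeasurable M (ae_of_all _ hFb)
  have iG : Integrable G μ := .of_bound hG.aestronglyMeasurable K (ae_of_all _ hGb)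
  have iFG : Integrable (fun x => F x * G x) μ :=
    iG.bdd_mul hF.aestronglyMeasurable (ae_of_all _ hFb)
  have key : ∀ x y, F x * G x + F y * G y ≤ F x * G y + F y * G x := by
    intro x y
    rcases le_total x y with h | h
    · nlinarith [hFm h, hGm h, mul_nonneg (sub_nonneg.2 (hFm h)) (sub_nonneg.2 (hGm h))]
    · nlinarith [hFm h, hGm h, mul_nonneg (sub_nonneg.2 (hFm h)) (sub_nonneg.2 (hGm h))]
  have h1 : ∀ x, F x * G x + ∫ y, F y * G y ∂μ ≤ F x * ∫ y, G y ∂μ + (∫ y, F y ∂μ) * G x := by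
    intro x
    have h := integral_mono (μ := μ) ((integrable_const (F x * G x)).add iFG)
      ((iG.const_mul (F x)).add (iF.mul_const (G x))) (fun y => key x y)
    simp only [Pi.add_apply] at h
    rw [integral_add (integrable_const _) iFG, integral_add (iG.const_mul _) (iF.mul_const _),
      integral_const, probReal_univ, one_smul, integral_const_mul, integral_mul_const] at h
    exact h
  have h2 := integral_mono (μ := μ) (iFG.add (integrable_const (∫ y, F y * G y ∂μ)))
      ((iF.mul_const (∫ y, G y ∂μ)).add (iG.const_mul (∫ y, F y ∂μ))) h1
  simp only [Pi.add_apply] at h2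
  rw [integral_add iFG (integrable_const _), integral_add (iF.mul_const _) (iG.const_mul _),
      integral_const_mul, integral_mul_const, integral_const, probReal_univ, one_smul] at h2
  linarith

/-! ### Splitting a Dirichlet vector into two blocks -/

open scoped Classical in
/-- The vector with block `r • η` on `A` and `(1 - r) • ζ` off `A`, for `q = (r, (η, ζ))`. The
truncations at `0` change nothing for `r ∈ [0, 1]`, and make each block monotone or antitone in `r`
on all of `ℝ` when `η, ζ ≥ 0`. -/
def glue {n : ℕ} (A : Set (Fin (n + 1)))
    (q : ℝ × (({i // i ∈ A} → ℝ) × ({i // i ∉ A} → ℝ))) : Fin (n + 1) → ℝ := fun i =>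
  if h : i ∈ A then max q.1 0 * q.2.1 ⟨i, h⟩ else max (1 - q.1) 0 * q.2.2 ⟨i, h⟩

theorem measurable_glue {n : ℕ} (A : Set (Fin (n + 1))) : Measurable (glue A) := by
  refine measurable_pi_lambda _ fun i => ?_
  unfold glue
  by_cases h : i ∈ A
  · simp only [h, dite_true]; fun_prop
  · simp only [h, dite_false]; fun_prop

theorem gammaMeasure_pos (a : ℝ) : ∀ᵐ x ∂(ProbabilityTheory.gammaMeasure a 1), 0 < x := by
  rw [gammaMeasure_eq, ae_withDensity_iff (measurable_gammaDens a)]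
  refine ae_of_all _ fun x hx => ?_
  by_contra h
  exact hx (indicator_of_notMem (by simpa using h) _)

/-- If `(s, η)` and `(t, ζ)` are independent with independent components, then `s / (s + t)`, `η`
and `ζ` are independent. -/
theorem map_ratio {X Y : Type*} [MeasurableSpace X] [MeasurableSpace Y] (μ ν : Measure ℝ)
    (D : Measure X) (E : Measure Y) [IsProbabilityMeasure μ] [IsProbabilityMeasure ν]
    [IsProbabilityMeasure D] [IsProbabilityMeasure E] :
    ((μ.prod D).prod (ν.prod E)).map
      (fun q => (q.1.1 / (q.1.1 + q.2.1), (q.1.2, q.2.2))) =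
    ((μ.prod ν).map fun q => q.1 / (q.1 + q.2)).prod (D.prod E) := by
  have hr : Measurable fun q : ℝ × ℝ => q.1 / (q.1 + q.2) := by fun_prop
  have := Measure.isProbabilityMeasure_map (μ := μ.prod ν) hr.aemeasurable
  refine Measure.ext_of_lintegral _ fun F hF => ?_
  have hF4 : Measurable fun q : (ℝ × X) × (ℝ × Y) =>
      F (q.1.1 / (q.1.1 + q.2.1), (q.1.2, q.2.2)) := by fun_prop
  rw [lintegral_map hF (by fun_prop), lintegral_prod _ hF4.aemeasurable,
    lintegral_prod _ hF.aemeasurable, lintegral_map hF.lintegral_prod_right' hr,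
    lintegral_prod _ hF4.lintegral_prod_right'.aemeasurable]
  refine Eq.trans ?_ (lintegral_prod _
    (hF.lintegral_prod_right' (ν := D.prod E) |>.comp hr).aemeasurable).symm
  refine lintegral_congr fun s => ?_
  have h1 : ∀ x : X, ∫⁻ z : ℝ × Y, F (s / (s + z.1), (x, z.2)) ∂(ν.prod E) =
      ∫⁻ t, ∫⁻ y, F (s / (s + t), (x, y)) ∂E ∂ν := fun x =>
    lintegral_prod (fun z : ℝ × Y => F (s / (s + z.1), (x, z.2))) (by fun_prop)
  have h2 : ∀ t : ℝ, ∫⁻ z : X × Y, F (s / (s + t), z) ∂(D.prod E) =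
      ∫⁻ x, ∫⁻ y, F (s / (s + t), (x, y)) ∂E ∂D := fun t =>
    lintegral_prod (fun z : X × Y => F (s / (s + t), z)) (by fun_prop)
  simp only [h1, Function.comp_def, h2]
  refine lintegral_lintegral_swap (Measurable.aemeasurable ?_)
  have : Measurable fun w : (X × ℝ) × Y => F (s / (s + w.1.2), (w.1.1, w.2)) := by fun_prop
  exact this.lintegral_prod_right'

/-- A Dirichlet vector is `r • η` on `A` and `(1 - r) • ζ` off `A` with `r, η, ζ` independent. -/
theorem dirichlet_split (n : ℕ) (a : Fin (n + 1) → ℝ) (ha : ∀ i, 0 < a i)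
    (A : Set (Fin (n + 1))) (h₁ : A.Nonempty) (h₂ : Aᶜ.Nonempty) :
    ∃ (ρ : Measure ℝ) (D : Measure ({i // i ∈ A} → ℝ)) (E : Measure ({i // i ∉ A} → ℝ)),
      IsProbabilityMeasure ρ ∧ IsProbabilityMeasure D ∧ IsProbabilityMeasure E ∧
      (∀ᵐ x ∂D, ∀ i, 0 ≤ x i) ∧ (∀ᵐ x ∂E, ∀ i, 0 ≤ x i) ∧
      dirichletSimplex n a = (ρ.prod (D.prod E)).map (glue A) := by
  classical
  have : Nonempty {i // i ∈ A} := h₁.to_subtype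
  have : Nonempty {i // i ∉ A} := h₂.to_subtype
  obtain ⟨D, hD, hD0, hDm⟩ := exists_dirichlet (fun i : {i // i ∈ A} => a i) fun i => ha _
  obtain ⟨E, hE, hE0, hEm⟩ := exists_dirichlet (fun i : {i // i ∉ A} => a i) fun i => ha _
  have hA : 0 < ∑ i, a i := Finset.sum_pos (fun i _ => ha i) ⟨0, Finset.mem_univ _⟩
  have hA₁ : 0 < ∑ i : {i // i ∈ A}, a i := Finset.sum_pos (fun i _ => ha i) Finset.univ_nonempty
  have hA₂ : 0 < ∑ i : {i // i ∉ A}, a i := Finset.sum_pos (fun i _ => ha i) Finset.univ_nonempty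
  have hpr := fun i => ProbabilityTheory.isProbabilityMeasure_gammaMeasure (ha i) one_pos
  have hp := ProbabilityTheory.isProbabilityMeasure_gammaMeasure hA one_pos
  have hp₁ := ProbabilityTheory.isProbabilityMeasure_gammaMeasure hA₁ one_pos
  have hp₂ := ProbabilityTheory.isProbabilityMeasure_gammaMeasure hA₂ one_pos
  have hprob := isProbabilityMeasure_dirichletSimplex n a ha
  set γ₁ := ProbabilityTheory.gammaMeasure (∑ i : {i // i ∈ A}, a i) 1
  set γ₂ := ProbabilityTheory.gammaMeasure (∑ i : {i // i ∉ A}, a i) 1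
  have hr : Measurable fun q : ℝ × ℝ => q.1 / (q.1 + q.2) := by fun_prop
  refine ⟨(γ₁.prod γ₂).map fun q => q.1 / (q.1 + q.2), D, E,
    Measure.isProbabilityMeasure_map hr.aemeasurable, hD, hE, hD0, hE0, ?_⟩
  set P := Measure.pi fun i => ProbabilityTheory.gammaMeasure (a i) 1
  have e1 : dirichletSimplex n a = P.map (fun g => (∑ i, g i)⁻¹ • g) := by
    have h := congrArg (Measure.map Prod.snd) (gamma_dirichlet_map n a ha)
    rw [Measure.map_map measurable_snd (by fun_prop), Measure.map_snd_prod, measure_univ,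
      one_smul] at h
    exact h.symm
  have hsplit := measurePreserving_piEquivPiSubtypeProd
    (fun i => ProbabilityTheory.gammaMeasure (a i) 1) (fun i => i ∈ A)
  set e := MeasurableEquiv.piEquivPiSubtypeProd (fun _ : Fin (n + 1) => ℝ) (fun i => i ∈ A)
  -- `N₁` and `N₂` normalize the two blocks of the gamma vector.
  let N₁ : ({i // i ∈ A} → ℝ) → ℝ × ({i // i ∈ A} → ℝ) := fun g => (∑ i, g i, (∑ i, g i)⁻¹ • g)
  let N₂ : ({i // i ∉ A} → ℝ) → ℝ × ({i // i ∉ A} → ℝ) := fun g => (∑ i, g i, (∑ i, g i)⁻¹ • g)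
  have hN₁ : Measurable N₁ := by fun_prop
  have hN₂ : Measurable N₂ := by fun_prop
  have hQ : P.map (Prod.map N₁ N₂ ∘ e) = (γ₁.prod D).prod (γ₂.prod E) := by
    rw [← Measure.map_map (hN₁.prodMap hN₂) e.measurable, hsplit.map_eq,
      ← Measure.map_prod_map _ _ hN₁ hN₂]
    exact congrArg₂ _ hDm hEm
  have hR : Measurable fun q : (ℝ × ({i // i ∈ A} → ℝ)) × (ℝ × ({i // i ∉ A} → ℝ)) =>
      (q.1.1 / (q.1.1 + q.2.1), (q.1.2, q.2.2)) := by fun_prop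
  have hgl := measurable_glue A
  have hNe : Measurable (Prod.map N₁ N₂ ∘ e) := (hN₁.prodMap hN₂).comp e.measurable
  rw [← map_ratio, Measure.map_map hgl hR, ← hQ, Measure.map_map (hgl.comp hR) hNe, e1]
  refine Measure.map_congr ?_
  -- Both block sums are almost surely positive, so no division below is by zero.
  have hpos : ∀ᵐ q ∂(γ₁.prod D).prod (γ₂.prod E), 0 < q.1.1 ∧ 0 < q.2.1 := by
    have t₁ := (Measure.quasiMeasurePreserving_fst (μ := γ₁) (ν := D)).ae (gammaMeasure_pos _)
    have t₂ := (Measure.quasiMeasurePreserving_fst (μ := γ₂) (ν := E)).ae (gammaMeasure_pos _)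
    exact ((Measure.quasiMeasurePreserving_fst (μ := γ₁.prod D) (ν := γ₂.prod E)).ae t₁).and
      ((Measure.quasiMeasurePreserving_snd (μ := γ₁.prod D) (ν := γ₂.prod E)).ae t₂)
  rw [← hQ] at hpos
  filter_upwards [ae_of_ae_map hNe.aemeasurable hpos] with g hg
  obtain ⟨hs, ht⟩ := hg
  change 0 < ∑ i : {i // i ∈ A}, g i at hs
  change 0 < ∑ i : {i // i ∉ A}, g i at ht
  have hsum : ∑ i, g i = ∑ i : {i // i ∈ A}, g i + ∑ i : {i // i ∉ A}, g i :=
    (Fintype.sum_subtype_add_sum_subtype (fun i => i ∈ A) g).symm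
  ext i
  rw [Pi.smul_apply, hsum]
  set s := ∑ i : {i // i ∈ A}, g i
  set t := ∑ i : {i // i ∉ A}, g i
  by_cases hi : i ∈ A
  · have : (glue A ((s / (s + t)), (fun i => s⁻¹ * g i, fun i => t⁻¹ * g i))) i =
        max (s / (s + t)) 0 * (s⁻¹ * g i) := by simp [glue, hi]
    refine Eq.trans ?_ this.symm
    rw [max_eq_left (by positivity), smul_eq_mul]
    field_simp
  · have : (glue A ((s / (s + t)), (fun i => s⁻¹ * g i, fun i => t⁻¹ * g i))) i =
        max (1 - s / (s + t)) 0 * (t⁻¹ * g i) := by simp [glue, hi]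
    refine Eq.trans ?_ this.symm
    have h1 : 1 - s / (s + t) = t / (s + t) := by field_simp; ring
    rw [h1, max_eq_left (by positivity), smul_eq_mul]
    field_simp

/-! ### Negative association -/

/-- Negative association of Dirichlet variables. Monotonicity is only needed on the nonnegative
orthant, which carries the distribution. -/
theorem dirichlet_negAssoc (n : ℕ) (a : Fin (n + 1) → ℝ) (ha : ∀ i, 0 < a i)
    (A : Set (Fin (n + 1))) (f₁ f₂ : (Fin (n + 1) → ℝ) → ℝ)
    (hmeas₁ : Measurable f₁) (hmeas₂ : Measurable f₂)
    (hbdd₁ : ∃ M, ∀ x, |f₁ x| ≤ M) (hbdd₂ : ∃ M, ∀ x, |f₂ x| ≤ M)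
    (hmono₁ : MonotoneOn f₁ (Ici 0)) (hmono₂ : MonotoneOn f₂ (Ici 0))
    (hdep₁ : ∀ x y : Fin (n + 1) → ℝ, (∀ i ∈ A, x i = y i) → f₁ x = f₁ y)
    (hdep₂ : ∀ x y : Fin (n + 1) → ℝ, (∀ i ∉ A, x i = y i) → f₂ x = f₂ y) :
    ∫ x, f₁ x * f₂ x ∂(dirichletSimplex n a) ≤
      (∫ x, f₁ x ∂(dirichletSimplex n a)) * ∫ x, f₂ x ∂(dirichletSimplex n a) := by
  have hprob := isProbabilityMeasure_dirichletSimplex n a ha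
  -- If one of the blocks is empty, the corresponding function is constant.
  rcases A.eq_empty_or_nonempty with hA | hA
  · have h : ∀ x, f₁ x = f₁ 0 := fun x => hdep₁ _ _ (by simp [hA])
    simp_rw [h, integral_const_mul, integral_const, probReal_univ, one_smul]
    exact le_rfl
  rcases Aᶜ.eq_empty_or_nonempty with hB | hB
  · have h : ∀ x, f₂ x = f₂ 0 := fun x => hdep₂ _ _ fun i hi => by
      have : i ∈ Aᶜ := hi
      simp [hB] at this
    simp_rw [h, integral_mul_const, integral_const, probReal_univ, one_smul]
    exact le_rfl
  obtain ⟨M, hM⟩ := hbdd₁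
  obtain ⟨K, hK⟩ := hbdd₂
  obtain ⟨ρ, D, E, hρ, hD, hE, hD0, hE0, hsplit⟩ := dirichlet_split n a ha A hA hB
  have hgl := measurable_glue A
  -- By `hdep₁` and `hdep₂` the unused block may be replaced by `0`.
  let k₁ : ℝ × ({i // i ∈ A} → ℝ) → ℝ := fun q => f₁ (glue A (q.1, (q.2, 0)))
  let k₂ : ℝ × ({i // i ∉ A} → ℝ) → ℝ := fun q => f₂ (glue A (q.1, (0, q.2)))
  have hk₁ : Measurable k₁ := hmeas₁.comp (hgl.comp (by fun_prop))
  have hk₂ : Measurable k₂ := hmeas₂.comp (hgl.comp (by fun_prop))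
  have hf₁ : ∀ r x y, f₁ (glue A (r, (x, y))) = k₁ (r, x) := fun r x y =>
    hdep₁ _ _ fun i hi => by simp [glue, hi]
  have hf₂ : ∀ r x y, f₂ (glue A (r, (x, y))) = k₂ (r, y) := fun r x y =>
    hdep₂ _ _ fun i hi => by simp [glue, hi]
  have ik₁ : ∀ r, Integrable (fun x => k₁ (r, x)) D := fun r =>
    .of_bound (hk₁.comp measurable_prodMk_left).aestronglyMeasurable M (ae_of_all _ fun _ => hM _)
  have ik₂ : ∀ r, Integrable (fun x => k₂ (r, x)) E := fun r =>
    .of_bound (hk₂.comp measurable_prodMk_left).aestronglyMeasurable K (ae_of_all _ fun _ => hK _)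
  let F : ℝ → ℝ := fun r => ∫ x, k₁ (r, x) ∂D
  let G : ℝ → ℝ := fun r => ∫ y, k₂ (r, y) ∂E
  have hF : Measurable F := (hk₁.stronglyMeasurable.integral_prod_right').measurable
  have hG : Measurable G := (hk₂.stronglyMeasurable.integral_prod_right').measurable
  have hFb : ∀ r, |F r| ≤ M := fun r => by
    simpa using norm_integral_le_of_norm_le_const (μ := D) (f := fun x => k₁ (r, x))
      (ae_of_all _ fun _ => hM _)
  have hGb : ∀ r, |G r| ≤ K := fun r => by
    simpa using norm_integral_le_of_norm_le_const (μ := E) (f := fun x => k₂ (r, x))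
      (ae_of_all _ fun _ => hK _)
  have hFm : Monotone F := fun r r' hrr => by
    refine integral_mono_ae (ik₁ r) (ik₁ r') ?_
    filter_upwards [hD0] with x hx
    refine hmono₁ (fun i => ?_) (fun i => ?_) fun i => ?_
    · by_cases hi : i ∈ A
      · simpa [glue, hi] using mul_nonneg (le_max_right r 0) (hx ⟨i, hi⟩)
      · simp [glue, hi]
    · by_cases hi : i ∈ A
      · simpa [glue, hi] using mul_nonneg (le_max_right r' 0) (hx ⟨i, hi⟩)
      · simp [glue, hi]
    · by_cases hi : i ∈ A
      · simpa [glue, hi] using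
          mul_le_mul_of_nonneg_right (max_le_max_right 0 hrr) (hx ⟨i, hi⟩)
      · simp [glue, hi]
  have hGm : Antitone G := fun r r' hrr => by
    refine integral_mono_ae (ik₂ r') (ik₂ r) ?_
    filter_upwards [hE0] with x hx
    refine hmono₂ (fun i => ?_) (fun i => ?_) fun i => ?_
    · by_cases hi : i ∈ A
      · simp [glue, hi]
      · simpa [glue, hi] using mul_nonneg (le_max_right (1 - r') 0) (hx ⟨i, hi⟩)
    · by_cases hi : i ∈ A
      · simp [glue, hi]
      · simpa [glue, hi] using mul_nonneg (le_max_right (1 - r) 0) (hx ⟨i, hi⟩)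
    · by_cases hi : i ∈ A
      · simp [glue, hi]
      · simpa [glue, hi] using mul_le_mul_of_nonneg_right
          (max_le_max_right 0 (sub_le_sub_left hrr 1)) (hx ⟨i, hi⟩)
  have main : ∀ f : (Fin (n + 1) → ℝ) → ℝ, Measurable f → (∃ C, ∀ x, |f x| ≤ C) →
      ∫ x, f x ∂(dirichletSimplex n a) =
        ∫ r, ∫ z, f (glue A (r, z)) ∂(D.prod E) ∂ρ := by
    rintro f hf ⟨C, hC⟩
    rw [hsplit, integral_map hgl.aemeasurable hf.aestronglyMeasurable, integral_prod]
    exact .of_bound (hf.comp hgl).aestronglyMeasurable C (ae_of_all _ fun _ => hC _)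
  have m₁ : ∫ x, f₁ x ∂(dirichletSimplex n a) = ∫ r, F r ∂ρ := by
    rw [main f₁ hmeas₁ ⟨M, hM⟩]
    refine integral_congr_ae (ae_of_all _ fun r => ?_)
    have := integral_prod_mul (μ := D) (ν := E) (fun x => k₁ (r, x)) (fun _ => (1 : ℝ))
    simpa [hf₁, F] using this
  have m₂ : ∫ x, f₂ x ∂(dirichletSimplex n a) = ∫ r, G r ∂ρ := by
    rw [main f₂ hmeas₂ ⟨K, hK⟩]
    refine integral_congr_ae (ae_of_all _ fun r => ?_)
    have := integral_prod_mul (μ := D) (ν := E) (fun _ => (1 : ℝ)) (fun x => k₂ (r, x))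
    simpa [hf₂, G] using this
  have m₁₂ : ∫ x, f₁ x * f₂ x ∂(dirichletSimplex n a) = ∫ r, F r * G r ∂ρ := by
    rw [main (fun x => f₁ x * f₂ x) (hmeas₁.mul hmeas₂) ⟨M * K, fun x => by
      rw [abs_mul]
      exact mul_le_mul (hM x) (hK x) (abs_nonneg _) ((abs_nonneg _).trans (hM x))⟩]
    refine integral_congr_ae (ae_of_all _ fun r => ?_)
    have := integral_prod_mul (μ := D) (ν := E) (fun x => k₁ (r, x)) (fun x => k₂ (r, x))
    simpa [hf₁, hf₂, F, G] using this
  rw [m₁, m₂, m₁₂]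
  exact integral_mul_le_of_antivary hF hG hFb hGb hFm hGm

/-! ### Reduction of the law on the sphere to the Dirichlet distribution -/

theorem isProbabilityMeasure_rademacher : IsProbabilityMeasure rademacher := by
  constructor
  simp [rademacher, ENNReal.inv_two_add_inv_two]

theorem rademacher_abs : ∀ᵐ e ∂rademacher, |e| = 1 := by
  have hs : MeasurableSet {e : ℝ | |e| = 1} :=
    measurableSet_eq_fun (f := fun e : ℝ => |e|) (by fun_prop) measurable_const
  rw [rademacher, ae_add_measure_iff]
  constructor <;> refine Measure.ae_smul_measure ?_ _ <;> rw [ae_dirac_iff hs] <;> simp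

theorem integral_abs_sphereLaw (n : ℕ) (p : ℝ) (a : Fin (n + 1) → ℝ) (ha : ∀ i, 0 < a i)
    (f : (Fin (n + 1) → ℝ) → ℝ) (hf : Measurable f) :
    ∫ x, f (fun i => |x i|) ∂(sphereLaw n p a) =
      ∫ x, f (fun i => |x i ^ (1 / p)|) ∂(dirichletSimplex n a) := by
  have := isProbabilityMeasure_dirichletSimplex n a ha
  have := isProbabilityMeasure_rademacher
  rw [sphereLaw, integral_map (by fun_prop)
    (Measurable.aestronglyMeasurable (by fun_prop))]
  have hε : ∀ᵐ e ∂(Measure.pi fun _ : Fin (n + 1) => rademacher), ∀ i, |e i| = 1 :=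
    ae_all_iff.2 fun i => (Measure.tendsto_eval_ae_ae
      (μ := fun _ : Fin (n + 1) => rademacher) (i := i)).eventually rademacher_abs
  have hq := (Measure.quasiMeasurePreserving_snd (μ := dirichletSimplex n a)
    (ν := Measure.pi fun _ : Fin (n + 1) => rademacher)).ae hε
  have := integral_fun_fst (μ := dirichletSimplex n a)
    (ν := Measure.pi fun _ : Fin (n + 1) => rademacher) (fun x => f (fun i => |x i ^ (1 / p)|))
  rw [probReal_univ, one_smul] at this
  rw [← this]
  refine integral_congr_ae ?_
  filter_upwards [hq] with q hq
  simp only [abs_mul, hq, one_mul]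

/-- Negative association of `|X_1|, …, |X_N|` for `X` distributed on the sphere as
`X_i = ε_i ξ_i^{1/p}` with `ξ` Dirichlet and `ε` independent Rademacher signs. -/
theorem statement13 (n : ℕ) (p : ℝ) (hp : 1 ≤ p)
    (a : Fin (n + 1) → ℝ) (ha : ∀ i, 0 < a i)
    (A₁ A₂ : Set (Fin (n + 1))) (hdisj : Disjoint A₁ A₂)
    (f₁ f₂ : (Fin (n + 1) → ℝ) → ℝ)
    (hmeas₁ : Measurable f₁) (hmeas₂ : Measurable f₂)
    (hbdd₁ : ∃ M, ∀ x, |f₁ x| ≤ M) (hbdd₂ : ∃ M, ∀ x, |f₂ x| ≤ M)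
    (hmono₁ : Monotone f₁) (hmono₂ : Monotone f₂)
    (hdep₁ : ∀ x y : Fin (n + 1) → ℝ, (∀ i ∈ A₁, x i = y i) → f₁ x = f₁ y)
    (hdep₂ : ∀ x y : Fin (n + 1) → ℝ, (∀ i ∈ A₂, x i = y i) → f₂ x = f₂ y) :
    ∫ x, f₁ (fun i => |x i|) * f₂ (fun i => |x i|) ∂(sphereLaw n p a) ≤
      (∫ x, f₁ (fun i => |x i|) ∂(sphereLaw n p a)) *
        ∫ x, f₂ (fun i => |x i|) ∂(sphereLaw n p a) := by
  let R : (Fin (n + 1) → ℝ) → (Fin (n + 1) → ℝ) := fun x i => |x i ^ (1 / p)|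
  have hR : Measurable R := by fun_prop
  have hp0 : 0 ≤ 1 / p := by positivity
  have hRm : MonotoneOn R (Ici 0) := fun x hx y hy hxy i => by
    have h0 : 0 ≤ x i := hx i
    have h1 : 0 ≤ y i := hy i
    simp only [R, abs_of_nonneg (Real.rpow_nonneg h0 _), abs_of_nonneg (Real.rpow_nonneg h1 _)]
    exact Real.rpow_le_rpow h0 (hxy i) hp0
  rw [integral_abs_sphereLaw n p a ha f₁ hmeas₁, integral_abs_sphereLaw n p a ha f₂ hmeas₂,
    integral_abs_sphereLaw n p a ha (fun x => f₁ x * f₂ x) (hmeas₁.mul hmeas₂)]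
  obtain ⟨M, hM⟩ := hbdd₁
  obtain ⟨K, hK⟩ := hbdd₂
  refine dirichlet_negAssoc n a ha A₁ (f₁ ∘ R) (f₂ ∘ R) (hmeas₁.comp hR) (hmeas₂.comp hR)
    ⟨M, fun x => hM _⟩ ⟨K, fun x => hK _⟩ (hmono₁.comp_monotoneOn hRm)
    (hmono₂.comp_monotoneOn hRm) (fun x y h => hdep₁ _ _ fun i hi => ?_)
    (fun x y h => hdep₂ _ _ fun i hi => ?_)
  · simp only [R, h i hi]
  · simp only [R, h i fun hi' => Set.disjoint_left.1 hdisj hi' hi]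

end
end

section
/- Let a > 0, c > 0, and let c(θ) > 0 satisfy c(θ)/θ → c as θ → ∞. Let Y_θ ∼ Beta(a, c(θ)). Then the family of laws of Y_θ satisfies, as θ → ∞, the large deviation principle on (0,1) at scale θ with good rate function J(x) = -c·log(1-x): for every open set G ⊂ (0,1), liminf_{θ→∞} (1/θ) log P(Y_θ ∈ G) ≥ -inf_{x ∈ G} J(x), and for every closed set F ⊂ (0,1), limsup_{θ→∞} (1/θ) log P(Y_θ ∈ F) ≤ -inf_{x ∈ F} J(x); moreover J has compact sublevel sets in [0,1). -/
/-!
The density of `Beta(a, b)` is `N(b) t^(a-1) (1-t)^(b-1)`, and only the factor `(1-t)^(b-1)`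
decays exponentially in `b`; no Stirling asymptotics for the normalizing constant
`N(b) = Γ(a+b) / (Γ(a) Γ(b))` are needed. From below, `N(b) ≥ 1/Γ(a)` for `b ≥ 2` because `Γ`
is increasing on `[2, ∞)`; from above, the mass of `(ε/2, ε)` is at most `1`, which gives
`N(b) ≤ K_ε (1-ε)^(-(b-1))`.

For `x ∈ G`, a short interval `(u, x) ⊆ G` has mass at least `K (1-x)^(b-1)`
(`betaMeasure_Ioo_ge`). If `x₀ > 0` is a lower bound of `F ∩ (0,1)`, then `F` has mass at most
`K_ε ((1-x₀)/(1-ε))^(b-1)` (`betaMeasure_le`), and `ε → 0` afterwards. Both bounds have the form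
`K q^(b-1)`, whose exponential rate along `b = c(θ)` is `cc * log q`
(`tendsto_scaled_log`). Since `J` is continuous on `(-∞, 1)`, its infimum over `F ∩ (0,1)` is at
most `J(x₀)` for `x₀ = inf (F ∩ (0,1))`.
-/

open MeasureTheory Filter Set
open scoped ENNReal Topology

noncomputable section

/-- The Beta(a,b) distribution on (0,1), given by its density. -/
def betaMeasure (a b : ℝ) : Measure ℝ :=
  volume.withDensity ((Set.Ioo (0 : ℝ) 1).indicator fun t =>
    ENNReal.ofReal (Real.Gamma (a + b) / (Real.Gamma a * Real.Gamma b) *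
      t ^ (a - 1) * (1 - t) ^ (b - 1)))

/-- The rate function `J(x) = -c log(1-x)`. -/
def betaRate (cc x : ℝ) : ℝ := -cc * Real.log (1 - x)

/-- The normalizing constant of the Beta(a,b) density. -/
def betaNorm (a b : ℝ) : ℝ := Real.Gamma (a + b) / (Real.Gamma a * Real.Gamma b)

lemma betaNorm_pos {a b : ℝ} (ha : 0 < a) (hb : 0 < b) : 0 < betaNorm a b :=
  div_pos (Real.Gamma_pos_of_pos (by linarith))
    (mul_pos (Real.Gamma_pos_of_pos ha) (Real.Gamma_pos_of_pos hb))

/-- The normalizing constant does not decay, since `Γ` is increasing on `[2, ∞)`. -/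
lemma betaNorm_ge {a b : ℝ} (ha : 0 < a) (hb : 2 ≤ b) : (Real.Gamma a)⁻¹ ≤ betaNorm a b := by
  have h1 := Real.Gamma_pos_of_pos ha
  have h2 : 0 < Real.Gamma b := Real.Gamma_pos_of_pos (by linarith)
  have h3 : Real.Gamma b ≤ Real.Gamma (a + b) :=
    Real.Gamma_strictMonoOn_Ici.monotoneOn (by simpa using hb)
      (by simp only [Set.mem_Ici]; linarith) (by linarith)
  rw [betaNorm, le_div_iff₀ (mul_pos h1 h2), inv_mul_cancel_left₀ h1.ne']
  exact h3

lemma betaMeasure_eq (a b : ℝ) : betaMeasure a b = ProbabilityTheory.betaMeasure a b := by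
  unfold betaMeasure ProbabilityTheory.betaMeasure
  congr 1
  funext t
  rw [ProbabilityTheory.betaPDF_eq, Set.indicator_apply]
  simp only [ProbabilityTheory.beta, Set.mem_Ioo, one_div_div]
  split_ifs <;> simp

lemma betaMeasure_le_one {a b : ℝ} (ha : 0 < a) (hb : 0 < b) (s : Set ℝ) :
    betaMeasure a b s ≤ 1 := by
  have := ProbabilityTheory.isProbabilityMeasureBeta ha hb
  rw [betaMeasure_eq]
  exact prob_le_one

lemma betaMeasure_Ioo_ge {a b u v : ℝ} (ha : 0 < a) (hb : 1 ≤ b) (hu : 0 < u) (huv : u < v)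
    (hv : v < 1) :
    ENNReal.ofReal (betaNorm a b * u ^ a * (1 - v) ^ (b - 1) * (v - u)) ≤
      betaMeasure a b (Set.Ioo u v) := by
  have hN := betaNorm_pos ha (by linarith : 0 < b)
  rw [betaMeasure, withDensity_apply _ measurableSet_Ioo,
    ENNReal.ofReal_mul' (by linarith : 0 ≤ v - u), ← Real.volume_Ioo, ← setLIntegral_const]
  refine setLIntegral_mono' measurableSet_Ioo fun t ht => ?_
  have ht0 : 0 < t := hu.trans ht.1
  have ht1 : t < 1 := ht.2.trans hv
  rw [Set.indicator_of_mem (show t ∈ Set.Ioo (0 : ℝ) 1 from ⟨ht0, ht1⟩)]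
  refine ENNReal.ofReal_le_ofReal ?_
  change _ ≤ betaNorm a b * _ * _
  -- `t ^ (a - 1) ≥ t ^ a` on `(0, 1)` avoids distinguishing `a < 1` from `a ≥ 1`
  have h1 : u ^ a ≤ t ^ (a - 1) :=
    (Real.rpow_le_rpow hu.le ht.1.le ha.le).trans
      (Real.rpow_le_rpow_of_exponent_ge ht0 ht1.le (by linarith))
  have h2 : (1 - v) ^ (b - 1) ≤ (1 - t) ^ (b - 1) :=
    Real.rpow_le_rpow (by linarith) (by linarith [ht.2]) (by linarith)
  have h3 : 0 ≤ (1 - v) ^ (b - 1) := Real.rpow_nonneg (by linarith) _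
  have h4 : 0 ≤ t ^ (a - 1) := Real.rpow_nonneg ht0.le _
  gcongr

lemma betaMeasure_le_betaNorm {a b x : ℝ} (ha : 0 < a) (hb : 1 ≤ b) (hx : 0 < x) (hx1 : x < 1)
    {F : Set ℝ} (hF : MeasurableSet F) (hFx : ∀ t ∈ F ∩ Set.Ioo (0 : ℝ) 1, x ≤ t) :
    betaMeasure a b F ≤ ENNReal.ofReal (betaNorm a b * x⁻¹ * (1 - x) ^ (b - 1)) := by
  have hN := betaNorm_pos ha (by linarith : 0 < b)
  set K := ENNReal.ofReal (betaNorm a b * x⁻¹ * (1 - x) ^ (b - 1)) with hK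
  calc betaMeasure a b F
      ≤ ∫⁻ t in F, (Set.Ico x 1).indicator (fun _ => K) t := by
        rw [betaMeasure, withDensity_apply _ hF]
        refine setLIntegral_mono' hF fun t ht => ?_
        by_cases h : t ∈ Set.Ioo (0 : ℝ) 1
        · have hxt := hFx t ⟨ht, h⟩
          rw [Set.indicator_of_mem h, Set.indicator_of_mem (show t ∈ Set.Ico x 1 from ⟨hxt, h.2⟩)]
          refine ENNReal.ofReal_le_ofReal ?_
          change betaNorm a b * _ * _ ≤ _
          have h1 : t ^ (a - 1) ≤ x⁻¹ := by
            calc t ^ (a - 1) ≤ t ^ (-1 : ℝ) :=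
                  Real.rpow_le_rpow_of_exponent_ge h.1 h.2.le (by linarith)
              _ = t⁻¹ := Real.rpow_neg_one t
              _ ≤ x⁻¹ := by gcongr
          have h2 : (1 - t) ^ (b - 1) ≤ (1 - x) ^ (b - 1) :=
            Real.rpow_le_rpow (by linarith [h.2]) (by linarith) (by linarith)
          have h3 : 0 ≤ (1 - t) ^ (b - 1) := Real.rpow_nonneg (by linarith [h.2]) _
          gcongr
        · rw [Set.indicator_of_notMem h]
          exact zero_le
    _ ≤ ∫⁻ t, (Set.Ico x 1).indicator (fun _ => K) t := setLIntegral_le_lintegral _ _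
    _ = K * ENNReal.ofReal (1 - x) := by
        rw [lintegral_indicator_const measurableSet_Ico, Real.volume_Ico]
    _ ≤ K * 1 := by
        gcongr
        exact ENNReal.ofReal_le_one.2 (by linarith)
    _ = K := mul_one K

lemma betaMeasure_le {a b x e : ℝ} (ha : 0 < a) (hb : 1 ≤ b) (hx : 0 < x) (hx1 : x < 1)
    (he : 0 < e) (he1 : e < 1)
    {F : Set ℝ} (hF : MeasurableSet F) (hFx : ∀ t ∈ F ∩ Set.Ioo (0 : ℝ) 1, x ≤ t) :
    betaMeasure a b F ≤ ENNReal.ofReal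
      (x⁻¹ * ((e / 2) ^ a * (e / 2))⁻¹ * ((1 - x) / (1 - e)) ^ (b - 1)) := by
  refine (betaMeasure_le_betaNorm ha hb hx hx1 hF hFx).trans (ENNReal.ofReal_le_ofReal ?_)
  have h := (betaMeasure_Ioo_ge ha hb (half_pos he) (half_lt_self he) he1).trans
    (betaMeasure_le_one ha (by linarith) _)
  rw [ENNReal.ofReal_le_one, sub_half] at h
  have h1 : 0 < (1 - e) ^ (b - 1) := Real.rpow_pos_of_pos (by linarith) _
  have h2 : 0 < (e / 2) ^ a := Real.rpow_pos_of_pos (by linarith) _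
  have h3 : 0 ≤ (1 - x) ^ (b - 1) := Real.rpow_nonneg (by linarith) _
  have hN : betaNorm a b ≤ ((e / 2) ^ a * (e / 2))⁻¹ * ((1 - e) ^ (b - 1))⁻¹ := by
    rw [← mul_inv, ← one_div, le_div_iff₀ (by positivity)]
    calc _ = betaNorm a b * (e / 2) ^ a * (1 - e) ^ (b - 1) * (e / 2) := by ring
      _ ≤ 1 := h
  rw [Real.div_rpow (by linarith : 0 ≤ 1 - x) (by linarith : 0 ≤ 1 - e)]
  calc betaNorm a b * x⁻¹ * (1 - x) ^ (b - 1)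
      ≤ ((e / 2) ^ a * (e / 2))⁻¹ * ((1 - e) ^ (b - 1))⁻¹ * x⁻¹ * (1 - x) ^ (b - 1) := by
        gcongr
    _ = _ := by ring

lemma tendsto_atTop_of_div {cc : ℝ} (hcc : 0 < cc) {c : ℝ → ℝ}
    (hlim : Tendsto (fun θ => c θ / θ) atTop (𝓝 cc)) : Tendsto c atTop atTop := by
  refine (hlim.pos_mul_atTop hcc tendsto_id).congr' ?_
  filter_upwards [eventually_gt_atTop 0] with θ hθ
  simp only [id]
  field_simp

lemma tendsto_scaled_log {cc K q : ℝ} {c : ℝ → ℝ} (hK : 0 < K) (hq : 0 < q)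
    (hlim : Tendsto (fun θ => c θ / θ) atTop (𝓝 cc)) :
    Tendsto (fun θ : ℝ => ((θ⁻¹ : ℝ) : EReal) *
      ENNReal.log (ENNReal.ofReal (K * q ^ (c θ - 1)))) atTop
      (𝓝 ((cc * Real.log q : ℝ) : EReal)) := by
  have hinv : Tendsto (fun θ : ℝ => θ⁻¹) atTop (𝓝 0) := tendsto_inv_atTop_zero
  have h : Tendsto (fun θ : ℝ => θ⁻¹ * (Real.log K - Real.log q) + c θ / θ * Real.log q) atTop
      (𝓝 (0 * (Real.log K - Real.log q) + cc * Real.log q)) :=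
    (hinv.mul_const _).add (hlim.mul_const _)
  rw [zero_mul, zero_add] at h
  refine ((continuous_coe_real_ereal.tendsto _).comp h).congr fun θ => ?_
  have hq' : 0 < q ^ (c θ - 1) := Real.rpow_pos_of_pos hq _
  rw [ENNReal.log_ofReal_of_pos (mul_pos hK hq'), ← EReal.coe_mul, Function.comp_apply,
    Real.log_mul hK.ne' hq'.ne', Real.log_rpow hq]
  congr 1
  ring

lemma scaled_log_mono {θ : ℝ} (hθ : 0 < θ) {x y : ℝ≥0∞} (h : x ≤ y) :
    ((θ⁻¹ : ℝ) : EReal) * ENNReal.log x ≤ ((θ⁻¹ : ℝ) : EReal) * ENNReal.log y :=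
  mul_le_mul_of_nonneg_left (ENNReal.log_monotone h)
    (EReal.coe_nonneg.2 (inv_nonneg.2 hθ.le))

/-- The local form of the lower bound, at a point `x` of an open set. -/
lemma le_liminf_of_mem {a cc x : ℝ} (ha : 0 < a) (hcc : 0 < cc) {c : ℝ → ℝ}
    (hlim : Tendsto (fun θ => c θ / θ) atTop (𝓝 cc)) {G : Set ℝ} (hG : IsOpen G)
    (hx : x ∈ G ∩ Set.Ioo (0 : ℝ) 1) :
    ((cc * Real.log (1 - x) : ℝ) : EReal) ≤ liminf (fun θ : ℝ =>
      ((θ⁻¹ : ℝ) : EReal) * ENNReal.log (betaMeasure a (c θ) G)) atTop := by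
  obtain ⟨hxG, hx0, hx1⟩ := hx
  obtain ⟨l, hl, hlG⟩ := exists_Ioc_subset_of_mem_nhds' (hG.mem_nhds hxG) hx0
  -- the midpoint of `(l, x)` is positive even when `l = 0`
  set u := (l + x) / 2 with hu
  have hu0 : 0 < u := by linarith [hl.1]
  have hux : u < x := by linarith [hl.2]
  have hGa := Real.Gamma_pos_of_pos ha
  have hK : 0 < (Real.Gamma a)⁻¹ * u ^ a * (x - u) :=
    mul_pos (mul_pos (inv_pos.2 hGa) (Real.rpow_pos_of_pos hu0 _)) (by linarith)
  rw [← (tendsto_scaled_log hK (by linarith : 0 < 1 - x) hlim).liminf_eq]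
  refine liminf_le_liminf ?_
  filter_upwards [eventually_gt_atTop 0,
    (tendsto_atTop_of_div hcc hlim).eventually_ge_atTop 2] with θ hθ hb
  refine scaled_log_mono hθ ?_
  calc _ ≤ ENNReal.ofReal (betaNorm a (c θ) * u ^ a * (1 - x) ^ (c θ - 1) * (x - u)) := by
        refine ENNReal.ofReal_le_ofReal ?_
        have h1 := betaNorm_ge ha hb
        have h2 : 0 ≤ u ^ a := Real.rpow_nonneg hu0.le _
        have h3 : 0 ≤ (1 - x) ^ (c θ - 1) := Real.rpow_nonneg (by linarith) _
        have h4 : 0 ≤ x - u := by linarith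
        calc _ = (Real.Gamma a)⁻¹ * u ^ a * (1 - x) ^ (c θ - 1) * (x - u) := by ring
          _ ≤ _ := by gcongr
    _ ≤ betaMeasure a (c θ) (Set.Ioo u x) := betaMeasure_Ioo_ge ha (by linarith) hu0 hux hx1
    _ ≤ betaMeasure a (c θ) G :=
        measure_mono fun t ht => hlG ⟨by linarith [ht.1, hl.2], ht.2.le⟩

/-- The upper bound in terms of any lower bound `x ∈ [0,1)` of `F ∩ (0,1)`. -/
lemma limsup_le_of_lowerBound {a cc x : ℝ} (ha : 0 < a) (hcc : 0 < cc) {c : ℝ → ℝ}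
    (hlim : Tendsto (fun θ => c θ / θ) atTop (𝓝 cc)) {F : Set ℝ} (hF : MeasurableSet F)
    (hx0 : 0 ≤ x) (hx1 : x < 1) (hFx : ∀ t ∈ F ∩ Set.Ioo (0 : ℝ) 1, x ≤ t) :
    limsup (fun θ : ℝ =>
      ((θ⁻¹ : ℝ) : EReal) * ENNReal.log (betaMeasure a (c θ) F)) atTop ≤
      ((cc * Real.log (1 - x) : ℝ) : EReal) := by
  have hc := tendsto_atTop_of_div hcc hlim
  rcases hx0.eq_or_lt with rfl | hx0
  · refine limsup_le_of_le (by isBoundedDefault) ?_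
    filter_upwards [eventually_gt_atTop 0, hc.eventually_gt_atTop 0] with θ hθ hb
    refine (scaled_log_mono hθ (betaMeasure_le_one ha hb F)).trans ?_
    simp
  · have hcont : Tendsto (fun e : ℝ => ((cc * Real.log ((1 - x) / (1 - e)) : ℝ) : EReal))
        (𝓝[>] 0) (𝓝 ((cc * Real.log ((1 - x) / (1 - 0)) : ℝ) : EReal)) := by
      refine (continuous_coe_real_ereal.tendsto _).comp (Tendsto.mono_left ?_ nhdsWithin_le_nhds)
      refine ContinuousAt.tendsto (f := fun e : ℝ => cc * Real.log ((1 - x) / (1 - e))) ?_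
      refine continuousAt_const.mul (ContinuousAt.log ?_ ?_)
      · exact continuousAt_const.div (by fun_prop) (by norm_num)
      · simp only [sub_zero, div_one]; linarith
    rw [sub_zero, div_one] at hcont
    refine ge_of_tendsto hcont ?_
    filter_upwards [Ioo_mem_nhdsGT (zero_lt_one' ℝ)] with e he
    have he2 : 0 < e / 2 := half_pos he.1
    have hK : 0 < x⁻¹ * ((e / 2) ^ a * (e / 2))⁻¹ := by positivity
    rw [← (tendsto_scaled_log hK
      (div_pos (by linarith) (by linarith [he.2]) : 0 < (1 - x) / (1 - e)) hlim).limsup_eq]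
    refine limsup_le_limsup ?_
    filter_upwards [eventually_gt_atTop 0, hc.eventually_ge_atTop 1] with θ hθ hb
    exact scaled_log_mono hθ (betaMeasure_le ha hb hx0 hx1 he.1 he.2 hF hFx)

/-- The sublevel sets of the rate function are the intervals `[0, 1 - exp(-M/c)]`, which are
empty for `M < 0`. -/
lemma betaRate_sublevel {cc : ℝ} (hcc : 0 < cc) (M : ℝ) :
    {x ∈ Set.Ico (0 : ℝ) 1 | betaRate cc x ≤ M} = Set.Icc 0 (1 - Real.exp (-M / cc)) := by
  ext x
  simp only [Set.mem_ofPred_eq, Set.mem_Ico, Set.mem_Icc, betaRate]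
  have key : ∀ hx : x < 1, (-cc * Real.log (1 - x) ≤ M ↔ x ≤ 1 - Real.exp (-M / cc)) := by
    intro hx
    rw [le_sub_comm, ← Real.le_log_iff_exp_le (by linarith), div_le_iff₀ hcc]
    constructor <;> intro h <;> linarith
  constructor
  · rintro ⟨⟨h0, h1⟩, h⟩
    exact ⟨h0, (key h1).1 h⟩
  · rintro ⟨h0, h⟩
    have h1 : x < 1 := by linarith [Real.exp_pos (-M / cc)]
    exact ⟨⟨h0, h1⟩, (key h1).2 h⟩

/-- Large deviation principle for `Beta(a, c(θ))` as `θ → ∞` with `c(θ)/θ → c > 0`, on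
`(0,1)` at scale `θ`, with good rate function `J(x) = -c log(1-x)`: lower bound on open
subsets of `(0,1)`, upper bound on (relatively) closed subsets of `(0,1)`, and `J` has
compact sublevel sets in `[0,1)`. -/
theorem statement17 (a cc : ℝ) (ha : 0 < a) (hcc : 0 < cc)
    (c : ℝ → ℝ) (hcpos : ∀ θ > (0 : ℝ), 0 < c θ)
    (hlim : Tendsto (fun θ => c θ / θ) atTop (𝓝 cc)) :
    (∀ G : Set ℝ, IsOpen G →
      -(⨅ x ∈ G ∩ Set.Ioo (0 : ℝ) 1, ((betaRate cc x : ℝ) : EReal)) ≤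
        liminf (fun θ : ℝ =>
          ((θ⁻¹ : ℝ) : EReal) * ENNReal.log (betaMeasure a (c θ) G)) atTop) ∧
    (∀ F : Set ℝ, IsClosed F →
      limsup (fun θ : ℝ =>
          ((θ⁻¹ : ℝ) : EReal) * ENNReal.log (betaMeasure a (c θ) F)) atTop ≤
        -(⨅ x ∈ F ∩ Set.Ioo (0 : ℝ) 1, ((betaRate cc x : ℝ) : EReal))) ∧
    (∀ M : ℝ, IsCompact {x ∈ Set.Ico (0 : ℝ) 1 | betaRate cc x ≤ M}) := by
  have hneg : ∀ x, ((cc * Real.log (1 - x) : ℝ) : EReal) = -((betaRate cc x : ℝ) : EReal) := by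
    intro x
    rw [← EReal.coe_neg, betaRate]
    congr 1
    ring
  refine ⟨fun G hG => ?_, fun F hF => ?_, fun M => ?_⟩
  · rw [EReal.neg_le]
    refine le_iInf₂ fun x hx => ?_
    rw [EReal.neg_le, ← hneg]
    exact le_liminf_of_mem ha hcc hlim hG hx
  · rcases (F ∩ Set.Ioo (0 : ℝ) 1).eq_empty_or_nonempty with he | hne
    · -- the infimum over the empty set is `⊤`, so the mass of `F` has to vanish exactly
      have hz : ∀ b, betaMeasure a b F = 0 := by
        intro b
        rw [betaMeasure, withDensity_apply _ hF.measurableSet,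
          setLIntegral_indicator measurableSet_Ioo, Set.inter_comm, he]
        simp
      refine limsup_le_of_le (by isBoundedDefault) ?_
      filter_upwards [eventually_gt_atTop 0] with θ hθ
      rw [hz, ENNReal.log_zero, EReal.coe_mul_bot_of_pos (inv_pos.2 hθ)]
      exact bot_le
    · have hbdd : BddBelow (F ∩ Set.Ioo (0 : ℝ) 1) := ⟨0, fun t ht => ht.2.1.le⟩
      set x := sInf (F ∩ Set.Ioo (0 : ℝ) 1) with hx
      have hx0 : 0 ≤ x := le_csInf hne fun t ht => ht.2.1.le
      have hxle : ∀ t ∈ F ∩ Set.Ioo (0 : ℝ) 1, x ≤ t := fun t ht => csInf_le hbdd ht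
      have hx1 : x < 1 := by
        obtain ⟨t, ht⟩ := hne
        exact (hxle t ht).trans_lt ht.2.2
      refine (limsup_le_of_lowerBound ha hcc hlim hF.measurableSet hx0 hx1 hxle).trans ?_
      rw [hneg, EReal.neg_le_neg_iff]
      -- `x` may be the endpoint `0`, outside `F ∩ (0, 1)`; continuity of the rate covers this
      have hmem : x ∈ closure (F ∩ Set.Ioo (0 : ℝ) 1) := csInf_mem_closure hne hbdd
      have := mem_closure_iff_nhdsWithin_neBot.1 hmem
      have hcont : ContinuousAt (betaRate cc) x := by
        refine continuousAt_const.mul (ContinuousAt.log (by fun_prop) ?_)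
        linarith
      refine ge_of_tendsto (((continuous_coe_real_ereal.tendsto _).comp hcont.tendsto).mono_left
        (nhdsWithin_le_nhds (s := F ∩ Set.Ioo (0 : ℝ) 1))) ?_
      filter_upwards [self_mem_nhdsWithin] with t ht
      exact iInf₂_le t ht
  · rw [betaRate_sublevel hcc]
    exact isCompact_Icc

end
end

section
/- Fix k ≥ 1, 1 ≤ p < ∞, and positive reals a_1, …, a_k. For each N, let C^{(N)} = (C_1^{(N)}, …, C_k^{(N)}) be independent random variables where C_j^{(N)} = ε_j (Z_j^{(N)})^{1/p}, ε_j Rademacher, Z_j^{(N)} ∼ Beta(a_j, b_j^{(N)}) with p·b_j^{(N)} = N + o(N) for each j ≤ k (these are the first k canonical coordinates of a p-generalized Dirichlet vector). Then the laws of C^{(N)} satisfy the large deviation principle on (-1,1)^k at speed N with good rate function J(c) = -(1/p) log(∏_{i=1}^k (1-|c_i|^p)): liminf_N (1/N) log P(C^{(N)} ∈ G) ≥ -inf_G J for every open G, and limsup_N (1/N) log P(C^{(N)} ∈ F) ≤ -inf_F J for every closed F. -/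
/-!
On the cube the rate function splits as `J(c) = ∑ J_i(c_i)` with `J_i(x) = -(1/p) log (1 - |x|^p)`,
and under `radBeta p a b` the variable `1 - |C|^p` is `1 - Z` with `Z` Beta distributed.

Upper bound (`eventually_measure_closed_le`). For `0 ≤ θ < 1` the exponential moment
`E[exp (θ N J(C))]` factorizes over the coordinates into the moments `E[(1 - Z_j)^(-θ N / p)]`. Such a
moment is a quotient of beta functions with second parameters `b - θ N / p` and `b`; since
`b - θ N / p → ∞`, it is bounded by a power of `b` (`lintegral_moment_le`) and is subexponential in
`N`. If `J ≥ m` on `F ∩ (-1,1)^k`, Markov's inequality gives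
`P(C ∈ F) ≤ exp (-θ m N + o(N))`, and `θ → 1` yields the bound for every measurable `F` at once, with
no compactness argument.

Lower bound (`eventually_le_radBeta`). Near a point `x` with `|x| < 1`, the Beta density on a short
interval just above `|x|^p` is at least a constant times `(1 - t)^b`, because the normalizing constant
`Γ(a + b) / (Γ(a) Γ(b))` is at least `1 / Γ(a)` for `b ≥ 2`. A sup-norm ball around a point of the
open set is a product of intervals, so the one-dimensional bounds multiply.

Goodness (`isCompact_rateJ_le`). `J ≤ M` on the open cube is the closed condition
`exp (-p M) ≤ ∏ (1 - |c_i|^p)` on the closed cube, as the product vanishes on the boundary.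
-/

open MeasureTheory Filter Set
open scoped ENNReal Topology

noncomputable section

/-- The law of `ε Z^{1/p}` with `ε` Rademacher and `Z ∼ Beta(a,b)` independent. -/
def radBeta (p a b : ℝ) : Measure ℝ :=
  (rademacher.prod (betaMeasure a b)).map fun q => q.1 * q.2 ^ (1 / p)

/-- The open cube `(-1,1)^k`. -/
def cubeSet (k : ℕ) : Set (Fin k → ℝ) := {c | ∀ i, |c i| < 1}

/-- The rate function `J(c) = -(1/p) log ∏_i (1-|c_i|^p)`. -/
def rateJ (p : ℝ) (k : ℕ) (c : Fin k → ℝ) : ℝ :=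
  -(1 / p) * Real.log (∏ i, (1 - |c i| ^ p))


/-! ### One-dimensional integrals -/

lemma lintegral_rademacher (f : ℝ → ℝ≥0∞) :
    ∫⁻ x, f x ∂rademacher = 2⁻¹ * f (-1) + 2⁻¹ * f 1 := by
  simp [rademacher, lintegral_add_measure, lintegral_smul_measure]

lemma lintegral_betaMeasure (a b : ℝ) {f : ℝ → ℝ≥0∞} (hf : Measurable f) :
    ∫⁻ t, f t ∂(betaMeasure a b) = ∫⁻ t in Ioo (0 : ℝ) 1,
      ENNReal.ofReal (Real.Gamma (a + b) / (Real.Gamma a * Real.Gamma b) *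
        t ^ (a - 1) * (1 - t) ^ (b - 1)) * f t := by
  have hm : Measurable ((Set.Ioo (0 : ℝ) 1).indicator fun t : ℝ =>
      ENNReal.ofReal (Real.Gamma (a + b) / (Real.Gamma a * Real.Gamma b) *
        t ^ (a - 1) * (1 - t) ^ (b - 1))) :=
    Measurable.indicator (by fun_prop) measurableSet_Ioo
  rw [betaMeasure, lintegral_withDensity_eq_lintegral_mul _ hm hf,
    ← lintegral_indicator measurableSet_Ioo]
  refine lintegral_congr fun t => ?_
  by_cases ht : t ∈ Ioo (0 : ℝ) 1 <;> simp [ht]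

instance (a b : ℝ) : SFinite (betaMeasure a b) := by
  unfold betaMeasure; infer_instance

instance : IsProbabilityMeasure rademacher where
  measure_univ := by simp [rademacher, ENNReal.inv_two_add_inv_two]

lemma lintegral_radBeta (p a b : ℝ) {f : ℝ → ℝ≥0∞} (hf : Measurable f) :
    ∫⁻ c, f c ∂(radBeta p a b) = ∫⁻ t in Ioo (0 : ℝ) 1,
      ENNReal.ofReal (Real.Gamma (a + b) / (Real.Gamma a * Real.Gamma b) *
        t ^ (a - 1) * (1 - t) ^ (b - 1)) *
        (2⁻¹ * f (-t ^ (1 / p)) + 2⁻¹ * f (t ^ (1 / p))) := by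
  rw [radBeta, lintegral_map hf (by fun_prop), lintegral_prod_symm _ (by fun_prop)]
  simp_rw [lintegral_rademacher]
  rw [lintegral_betaMeasure _ _ (by fun_prop)]
  simp

lemma lintegral_betaDensity {a b : ℝ} (ha : 0 < a) (hb : 0 < b) :
    ∫⁻ t in Ioo (0 : ℝ) 1,
      ENNReal.ofReal (Real.Gamma (a + b) / (Real.Gamma a * Real.Gamma b) *
        t ^ (a - 1) * (1 - t) ^ (b - 1)) = 1 := by
  rw [← ProbabilityTheory.lintegral_betaPDF_eq_one ha hb, ProbabilityTheory.lintegral_betaPDF]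
  simp [ProbabilityTheory.beta]

lemma two_inv_add (x : ℝ≥0∞) : 2⁻¹ * x + 2⁻¹ * x = x := by
  rw [← add_mul, ENNReal.inv_two_add_inv_two, one_mul]

lemma isProbabilityMeasure_radBeta (p : ℝ) {a b : ℝ} (ha : 0 < a) (hb : 0 < b) :
    IsProbabilityMeasure (radBeta p a b) where
  measure_univ := by
    rw [← lintegral_one, lintegral_radBeta p a b measurable_const]
    simp_rw [two_inv_add, mul_one]
    exact lintegral_betaDensity ha hb

lemma ae_abs_lt_one {p : ℝ} (hp : 1 ≤ p) (a b : ℝ) :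
    ∀ᵐ c ∂(radBeta p a b), |c| < 1 := by
  have hms : MeasurableSet {c : ℝ | ¬ |c| < 1} :=
    (measurableSet_lt measurable_norm measurable_const).compl
  rw [ae_iff, ← lintegral_indicator_one hms,
    lintegral_radBeta _ _ _ (measurable_one.indicator hms),
    setLIntegral_eq_zero measurableSet_Ioo]
  intro t ht
  have h1 : |t ^ (1 / p)| < 1 := by
    rw [abs_of_nonneg (Real.rpow_nonneg ht.1.le _)]
    exact Real.rpow_lt_one ht.1.le ht.2 (by positivity)
  simp [h1, -one_div]

/-! ### Exponential moments (upper bound) -/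

lemma Gamma_add_nat_le {b : ℝ} (hb : 0 < b) (n : ℕ) :
    Real.Gamma (b + n) ≤ (b + n) ^ n * Real.Gamma b := by
  induction n with
  | zero => simp
  | succ n ih =>
    have hbn : 0 < b + n := by positivity
    push_cast
    rw [← add_assoc, Real.Gamma_add_one hbn.ne']
    calc (b + n) * Real.Gamma (b + n) ≤ (b + n) * ((b + n) ^ n * Real.Gamma b) := by gcongr
      _ = (b + n) ^ (n + 1) * Real.Gamma b := by ring
      _ ≤ _ := by
        have := (Real.Gamma_pos_of_pos hb).le
        gcongr ?_ ^ _ * _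
        linarith

lemma Gamma_le_Gamma_add {a b : ℝ} (ha : 0 < a) (hb : 2 ≤ b) :
    Real.Gamma b ≤ Real.Gamma (a + b) :=
  Real.Gamma_strictMonoOn_Ici.monotoneOn hb (mem_Ici.2 (by linarith)) (by linarith)

/-- The moment of order `-s` of `1 - |C|^p = 1 - Z` is a ratio of beta functions, hence at most
polynomial in `b` as long as `b - s` stays away from `0`. -/
lemma lintegral_moment_le {p a b s : ℝ} (hp : 1 ≤ p) (ha : 0 < a) (hs : 0 ≤ s)
    (hbs : 2 ≤ b - s) {n : ℕ} (hn : a ≤ n) :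
    ∫⁻ c, ENNReal.ofReal ((1 - |c| ^ p) ^ (-s)) ∂(radBeta p a b) ≤
      ENNReal.ofReal ((b + n) ^ n) := by
  rw [lintegral_radBeta _ _ _ (by fun_prop)]
  have hb : 2 ≤ b := by linarith
  have hGa := Real.Gamma_pos_of_pos ha
  have hGb := Real.Gamma_pos_of_pos (show 0 < b by linarith)
  have hGbs := Real.Gamma_pos_of_pos (show 0 < b - s by linarith)
  have hGab := Real.Gamma_pos_of_pos (show 0 < a + b by linarith)
  have hGabs := Real.Gamma_pos_of_pos (show 0 < a + (b - s) by linarith)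
  have hratio : Real.Gamma (a + b) / (Real.Gamma a * Real.Gamma b) ≤
      (b + n) ^ n * (Real.Gamma (a + (b - s)) / (Real.Gamma a * Real.Gamma (b - s))) := by
    have h1 : Real.Gamma (a + b) ≤ (b + n) ^ n * Real.Gamma b := by
      refine le_trans ?_ (Gamma_add_nat_le (by linarith) n)
      exact Real.Gamma_strictMonoOn_Ici.monotoneOn (mem_Ici.2 (by linarith))
        (mem_Ici.2 (by linarith)) (by linarith)
    have h2 := Gamma_le_Gamma_add ha hbs
    have h3 : 0 ≤ (b + n) ^ n := by positivity
    calc Real.Gamma (a + b) / (Real.Gamma a * Real.Gamma b)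
        ≤ ((b + n) ^ n * Real.Gamma b) / (Real.Gamma a * Real.Gamma b) := by gcongr
      _ = (b + n) ^ n * (Real.Gamma (b - s) / (Real.Gamma a * Real.Gamma (b - s))) := by
        field_simp
      _ ≤ _ := by gcongr
  calc _ ≤ ∫⁻ t in Ioo (0 : ℝ) 1, ENNReal.ofReal ((b + n) ^ n) *
        ENNReal.ofReal (Real.Gamma (a + (b - s)) / (Real.Gamma a * Real.Gamma (b - s)) *
        t ^ (a - 1) * (1 - t) ^ (b - s - 1)) := by
        refine setLIntegral_mono (by fun_prop) fun t ht => ?_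
        have ht0 := ht.1
        have ht1 : 0 < 1 - t := by linarith [ht.2]
        have hpow : |t ^ (1 / p)| ^ p = t := by
          rw [abs_of_nonneg (Real.rpow_nonneg ht0.le _), ← Real.rpow_mul ht0.le,
            one_div_mul_cancel (by positivity), Real.rpow_one]
        rw [abs_neg, hpow, two_inv_add, ← ENNReal.ofReal_mul (by positivity),
          ← ENNReal.ofReal_mul (by positivity)]
        apply ENNReal.ofReal_le_ofReal
        have : (1 - t) ^ (b - s - 1) = (1 - t) ^ (b - 1) * (1 - t) ^ (-s) := by
          rw [← Real.rpow_add ht1]; ring_nf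
        rw [this]
        calc _ = Real.Gamma (a + b) / (Real.Gamma a * Real.Gamma b) *
              (t ^ (a - 1) * ((1 - t) ^ (b - 1) * (1 - t) ^ (-s))) := by ring
          _ ≤ (b + n) ^ n * (Real.Gamma (a + (b - s)) / (Real.Gamma a * Real.Gamma (b - s))) *
              (t ^ (a - 1) * ((1 - t) ^ (b - 1) * (1 - t) ^ (-s))) := by gcongr
          _ = _ := by ring
    _ = _ := by
        rw [lintegral_const_mul _ (by fun_prop), lintegral_betaDensity ha (by linarith), mul_one]

lemma eventually_moment_le {p a : ℝ} (hp : 1 ≤ p) (ha : 0 < a) {b : ℕ → ℝ}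
    (hb : Tendsto (fun N : ℕ => p * b N / N) atTop (𝓝 1)) {θ ε : ℝ} (hθ0 : 0 ≤ θ) (hθ : θ < 1)
    (hε : 0 < ε) :
    ∀ᶠ N : ℕ in atTop,
      ∫⁻ c, ENNReal.ofReal ((1 - |c| ^ p) ^ (-(θ * N / p))) ∂(radBeta p a (b N)) ≤
        ENNReal.ofReal (Real.exp (ε * N)) := by
  obtain ⟨n, hn⟩ := exists_nat_ge a
  have hp0 : 0 < p := by linarith
  have hpoly : ∀ᶠ x : ℝ in atTop, x ^ n ≤ Real.exp (ε / 4 * x) := by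
    filter_upwards [(isLittleO_pow_exp_pos_mul_atTop n (show 0 < ε / 4 by positivity)).bound
      one_pos, eventually_ge_atTop 0] with x hx hx0
    simpa [abs_of_nonneg hx0] using hx
  have hlin : Tendsto (fun N : ℕ => 2 * (N : ℝ) + n) atTop atTop :=
    tendsto_atTop_add_const_right _ _
      (tendsto_natCast_atTop_atTop.const_mul_atTop (by norm_num))
  have hbig : ∀ᶠ N : ℕ in atTop, 2 * p / ((1 - θ) / 2) ≤ (N : ℝ) :=
    tendsto_natCast_atTop_atTop.eventually_ge_atTop _
  filter_upwards [hlin.eventually hpoly, hbig, eventually_gt_atTop 0, eventually_ge_atTop n,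
    hb.eventually_lt_const (show (1 : ℝ) < 2 by norm_num),
    hb.eventually_const_lt (show (1 + θ) / 2 < 1 by linarith)] with N h1 h2 h3 h4 h5 h6
  have hN : (0 : ℝ) < N := by exact_mod_cast h3
  have hnN : (n : ℝ) ≤ N := by exact_mod_cast h4
  rw [div_lt_iff₀ hN] at h5
  rw [lt_div_iff₀ hN] at h6
  rw [div_le_iff₀ (by linarith)] at h2
  have hbs : 2 ≤ b N - θ * N / p := by
    rw [le_sub_iff_add_le, ← le_sub_iff_add_le', div_le_iff₀ hp0]
    nlinarith
  have hb0 : 0 ≤ b N := by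
    have : 0 ≤ θ * N / p := by positivity
    linarith
  refine (lintegral_moment_le hp ha (by positivity) hbs hn).trans (ENNReal.ofReal_le_ofReal ?_)
  calc (b N + n) ^ n ≤ (2 * (N : ℝ) + n) ^ n := by
        gcongr
        nlinarith
    _ ≤ Real.exp (ε / 4 * (2 * (N : ℝ) + n)) := h1
    _ ≤ _ := by
        apply Real.exp_le_exp.2
        nlinarith

/-! ### Local lower bound -/

/-- The one-dimensional lower bound: on a short interval just above `z = |x|^p` the Beta density is
at least a constant times `(1 - t)^b`. -/
lemma eventually_le_radBeta {p a : ℝ} (hp : 1 ≤ p) (ha : 0 < a) {b : ℕ → ℝ}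
    (hb : Tendsto (fun N : ℕ => p * b N / N) atTop (𝓝 1)) {x ℓ : ℝ} (hx : |x| < 1)
    {U : Set ℝ} (hU : U ∈ 𝓝 x) (hUm : MeasurableSet U)
    (hℓ : ℓ < 1 / p * Real.log (1 - |x| ^ p)) :
    ∀ᶠ N : ℕ in atTop, ENNReal.ofReal (Real.exp (ℓ * N)) ≤ radBeta p a (b N) U := by
  have hp0 : 0 < p := by linarith
  obtain ⟨ℓ', hℓ1, hℓ2⟩ := exists_between hℓ
  set z := |x| ^ p with hz
  have hz0 : 0 ≤ z := by positivity
  have hz1 : z < 1 := Real.rpow_lt_one (abs_nonneg _) hx hp0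
  have hzx : z ^ (1 / p) = |x| := by
    rw [hz, ← Real.rpow_mul (abs_nonneg _), mul_one_div_cancel hp0.ne', Real.rpow_one]
  have hcont : Continuous fun t : ℝ => t ^ (1 / p) :=
    Real.continuous_rpow_const (by positivity)
  -- one of the two signs carries the neighbourhood of `z` into `U`
  have hev : ∀ᶠ t in 𝓝 z, -t ^ (1 / p) ∈ U ∨ t ^ (1 / p) ∈ U := by
    rcases abs_cases x with ⟨h, -⟩ | ⟨h, -⟩
    · have : Tendsto (fun t : ℝ => t ^ (1 / p)) (𝓝 z) (𝓝 x) := by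
        have := hcont.tendsto z
        rwa [hzx, h] at this
      exact (this.eventually_mem hU).mono fun t ht => Or.inr ht
    · have : Tendsto (fun t : ℝ => -t ^ (1 / p)) (𝓝 z) (𝓝 x) := by
        have := (hcont.tendsto z).neg
        rwa [hzx, h, neg_neg] at this
      exact (this.eventually_mem hU).mono fun t ht => Or.inl ht
  have hlog : ∀ᶠ t in 𝓝 z, ℓ' < 1 / p * Real.log (1 - t) := by
    have : ContinuousAt (fun t : ℝ => 1 / p * Real.log (1 - t)) z := by
      have h1 : 1 - z ≠ 0 := by linarith
      fun_prop (disch := assumption)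
    exact this.eventually_const_lt hℓ2
  have hall := (hev.and (hlog.and (eventually_lt_nhds hz1))).filter_mono
    (nhdsWithin_le_nhds (s := Ioi z))
  obtain ⟨w, hw, hsub⟩ := mem_nhdsGT_iff_exists_Ioo_subset.1 hall
  obtain ⟨u, hzu, huw⟩ := exists_between (show z < w from hw)
  obtain ⟨v, huv, hvw⟩ := exists_between huw
  have hu0 : 0 < u := by linarith
  have hGa := Real.Gamma_pos_of_pos ha
  set K : ℝ := (v - u) * (u ^ a / Real.Gamma a / 2) with hK
  have hK0 : 0 < K := by
    have : 0 < v - u := by linarith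
    positivity
  have hkey : ∀ N : ℕ, 2 ≤ b N →
      ENNReal.ofReal (K * Real.exp (p * b N * ℓ')) ≤ radBeta p a (b N) U := by
    intro N hbN
    have hGb := Real.Gamma_pos_of_pos (show 0 < b N by linarith)
    have hG := Gamma_le_Gamma_add ha hbN
    have hIoo : Ioo u v ⊆ Ioo 0 1 := fun t ht =>
      ⟨hu0.trans ht.1, (hsub ⟨hzu.trans ht.1, ht.2.trans hvw⟩).2.2⟩
    rw [← lintegral_indicator_one hUm, lintegral_radBeta _ _ _ (measurable_one.indicator hUm)]
    refine le_trans ?_ (lintegral_mono_set hIoo)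
    calc ENNReal.ofReal (K * Real.exp (p * b N * ℓ'))
        = ∫⁻ t in Ioo u v, ENNReal.ofReal
            (u ^ a / Real.Gamma a * Real.exp (p * b N * ℓ')) * 2⁻¹ := by
          have h2 : (2⁻¹ : ℝ≥0∞) = ENNReal.ofReal 2⁻¹ := by
            rw [ENNReal.ofReal_inv_of_pos two_pos, ENNReal.ofReal_ofNat]
          rw [setLIntegral_const, Real.volume_Ioo, h2, ← ENNReal.ofReal_mul (by positivity),
            ← ENNReal.ofReal_mul (by positivity), hK]
          congr 1
          ring
      _ ≤ _ := by
          refine setLIntegral_mono' measurableSet_Ioo fun t ht => ?_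
          obtain ⟨hmem, hl, ht1⟩ := hsub ⟨hzu.trans ht.1, ht.2.trans hvw⟩
          have ht0 : 0 < t := hu0.trans ht.1
          have h1t : 0 < 1 - t := by linarith
          gcongr ?_ * ?_
          · apply ENNReal.ofReal_le_ofReal
            have e1 : u ^ a ≤ t ^ (a - 1) := by
              calc u ^ a ≤ t ^ a := Real.rpow_le_rpow hu0.le ht.1.le ha.le
                _ ≤ _ := Real.rpow_le_rpow_of_exponent_ge ht0 ht1.le (by linarith)
            have e2 : Real.exp (p * b N * ℓ') ≤ (1 - t) ^ (b N - 1) := by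
              calc Real.exp (p * b N * ℓ') ≤ Real.exp (Real.log (1 - t) * b N) := by
                    apply Real.exp_le_exp.2
                    have : p * ℓ' ≤ Real.log (1 - t) := by
                      have := mul_le_mul_of_nonneg_left hl.le hp0.le
                      rwa [← mul_assoc, mul_one_div_cancel hp0.ne', one_mul] at this
                    nlinarith
                _ = (1 - t) ^ b N := (Real.rpow_def_of_pos h1t _).symm
                _ ≤ _ := Real.rpow_le_rpow_of_exponent_ge h1t (by linarith) (by linarith)
            have e3 : 1 / Real.Gamma a ≤
                Real.Gamma (a + b N) / (Real.Gamma a * Real.Gamma (b N)) := by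
              rw [div_le_div_iff₀ hGa (by positivity)]
              nlinarith
            calc u ^ a / Real.Gamma a * Real.exp (p * b N * ℓ')
                = 1 / Real.Gamma a * u ^ a * Real.exp (p * b N * ℓ') := by ring
              _ ≤ _ := by gcongr
          · rcases hmem with h | h
            · rw [indicator_of_mem h]; simp
            · rw [indicator_of_mem h]; simp
  have hlim : Tendsto (fun N : ℕ => Real.log K / N + p * b N / N * ℓ') atTop (𝓝 ℓ') := by
    have h1 : Tendsto (fun N : ℕ => Real.log K / (N : ℝ)) atTop (𝓝 0) :=
      tendsto_const_nhds.div_atTop tendsto_natCast_atTop_atTop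
    simpa using h1.add (hb.mul_const ℓ')
  filter_upwards [hlim.eventually_const_lt hℓ1, eventually_gt_atTop 0,
    hb.eventually_const_lt (show (1 / 2 : ℝ) < 1 by norm_num),
    tendsto_natCast_atTop_atTop.eventually_ge_atTop (4 * p)] with N h1 h2 h3 h4
  have hN : (0 : ℝ) < N := by exact_mod_cast h2
  rw [lt_div_iff₀ hN] at h3
  refine le_trans (ENNReal.ofReal_le_ofReal ?_) (hkey N (by nlinarith))
  rw [← Real.exp_log hK0, ← Real.exp_add]
  apply Real.exp_le_exp.2
  have : Real.log K / N + p * b N / N * ℓ' = (Real.log K + p * b N * ℓ') / N := by ring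
  rw [this, lt_div_iff₀ hN] at h1
  exact h1.le

/-! ### Product measures and the rate function -/

lemma lintegral_pi_prod {k : ℕ} (μ : Fin k → Measure ℝ) [∀ i, IsProbabilityMeasure (μ i)]
    {f : ℝ → ℝ≥0∞} (hf : Measurable f) :
    ∫⁻ c, ∏ i, f (c i) ∂(Measure.pi μ) = ∏ i, ∫⁻ x, f x ∂(μ i) := by
  rw [ProbabilityTheory.lintegral_prod_eq_prod_lintegral_of_indepFun Finset.univ
    (fun i (c : Fin k → ℝ) => f (c i))
    (ProbabilityTheory.iIndepFun_pi fun _ => hf.aemeasurable) (fun i => by fun_prop)]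
  exact Finset.prod_congr rfl fun i _ =>
    (measurePreserving_eval μ i).lintegral_comp hf

lemma one_sub_abs_rpow_pos {p x : ℝ} (hp : 1 ≤ p) (hx : |x| < 1) : 0 < 1 - |x| ^ p :=
  sub_pos.2 (Real.rpow_lt_one (abs_nonneg _) hx (by linarith))

lemma rateJ_eq_sum {p : ℝ} (hp : 1 ≤ p) {k : ℕ} {c : Fin k → ℝ} (hc : c ∈ cubeSet k) :
    rateJ p k c = -∑ i, 1 / p * Real.log (1 - |c i| ^ p) := by
  rw [rateJ, Real.log_prod fun i _ => (one_sub_abs_rpow_pos hp (hc i)).ne', ← Finset.mul_sum]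
  ring

lemma prod_rpow_eq_exp {p : ℝ} (hp : 1 ≤ p) {k : ℕ} {c : Fin k → ℝ} (hc : c ∈ cubeSet k)
    (r : ℝ) : ∏ i, (1 - |c i| ^ p) ^ (-(r / p)) = Real.exp (r * rateJ p k c) := by
  rw [Real.finsetProd_rpow _ _ fun i _ => (one_sub_abs_rpow_pos hp (hc i)).le,
    Real.rpow_def_of_pos (Finset.prod_pos fun i _ => one_sub_abs_rpow_pos hp (hc i)), rateJ]
  congr 1
  ring

lemma prod_ofReal_exp {k : ℕ} (f : Fin k → ℝ) (N : ℝ) :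
    ∏ i, ENNReal.ofReal (Real.exp (f i * N)) = ENNReal.ofReal (Real.exp ((∑ i, f i) * N)) := by
  rw [← ENNReal.ofReal_prod_of_nonneg fun i _ => (Real.exp_pos _).le, ← Real.exp_sum,
    Finset.sum_mul]

lemma inv_mul_log_exp {N : ℕ} (hN : 0 < N) (x : ℝ) :
    (((N : ℝ)⁻¹ : ℝ) : EReal) * ENNReal.log (ENNReal.ofReal (Real.exp (x * N))) = (x : EReal) := by
  have hN' : (N : ℝ) ≠ 0 := by positivity
  rw [ENNReal.log_ofReal_of_pos (Real.exp_pos _), Real.log_exp, ← EReal.coe_mul]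
  congr 1
  field_simp

lemma inv_mul_log_mono (N : ℕ) {u v : ℝ≥0∞} (h : u ≤ v) :
    (((N : ℝ)⁻¹ : ℝ) : EReal) * ENNReal.log u ≤ (((N : ℝ)⁻¹ : ℝ) : EReal) * ENNReal.log v :=
  mul_le_mul_of_nonneg_left (ENNReal.log_monotone h) (EReal.coe_nonneg.2 (by positivity))

section LDP

variable {k : ℕ} {p : ℝ} {a : Fin k → ℝ} {b : ℕ → Fin k → ℝ}

/-- Chernoff bound: if `J ≥ m` on `F` then the exponential moment of order `θ N` of `J` controls
the probability of `F`. -/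
lemma eventually_measure_closed_le (hp : 1 ≤ p) (ha : ∀ j, 0 < a j) (hbpos : ∀ N j, 0 < b N j)
    (hb : ∀ j : Fin k, Tendsto (fun N : ℕ => p * b N j / N) atTop (𝓝 1))
    {F : Set (Fin k → ℝ)} (hF : MeasurableSet F) {m θ ε : ℝ}
    (hm : ∀ c ∈ F ∩ cubeSet k, m ≤ rateJ p k c) (hθ0 : 0 ≤ θ) (hθ : θ < 1) (hε : 0 < ε) :
    ∀ᶠ N : ℕ in atTop, (Measure.pi fun j : Fin k => radBeta p (a j) (b N j)) F ≤
      ENNReal.ofReal (Real.exp ((-(θ * m) + k * ε) * N)) := by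
  filter_upwards [eventually_all.2 fun j => eventually_moment_le hp (ha j) (hb j) hθ0 hθ hε]
    with N hN
  have hprob : ∀ j, IsProbabilityMeasure (radBeta p (a j) (b N j)) := fun j =>
    isProbabilityMeasure_radBeta p (ha j) (hbpos N j)
  set μ := fun j : Fin k => radBeta p (a j) (b N j) with hμ
  have hcube : ∀ᵐ c ∂(Measure.pi μ), c ∈ cubeSet k :=
    eventually_all.2 fun i =>
      (Measure.tendsto_eval_ae_ae (μ := μ) (i := i)).eventually (ae_abs_lt_one hp (a i) (b N i))
  calc Measure.pi μ F = ∫⁻ c, F.indicator 1 c ∂(Measure.pi μ) :=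
        (lintegral_indicator_one hF).symm
    _ ≤ ∫⁻ c, ENNReal.ofReal (Real.exp (-(θ * m) * N)) *
          ∏ i, ENNReal.ofReal ((1 - |c i| ^ p) ^ (-(θ * N / p))) ∂(Measure.pi μ) := by
        refine lintegral_mono_ae (hcube.mono fun c hc => ?_)
        by_cases hcF : c ∈ F
        · rw [indicator_of_mem hcF, Pi.one_apply, ← ENNReal.ofReal_prod_of_nonneg fun i _ =>
            Real.rpow_nonneg (one_sub_abs_rpow_pos hp (hc i)).le _, prod_rpow_eq_exp hp hc,
            ← ENNReal.ofReal_mul (Real.exp_pos _).le, ← Real.exp_add, ENNReal.one_le_ofReal]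
          apply Real.one_le_exp
          have := mul_le_mul_of_nonneg_left (hm c ⟨hcF, hc⟩)
            (show 0 ≤ θ * (N : ℝ) by positivity)
          linarith
        · simp [hcF]
    _ = ENNReal.ofReal (Real.exp (-(θ * m) * N)) *
          ∏ i, ∫⁻ x, ENNReal.ofReal ((1 - |x| ^ p) ^ (-(θ * N / p))) ∂(μ i) := by
        rw [lintegral_const_mul _ (Finset.measurable_prod _ fun i _ => by fun_prop),
          lintegral_pi_prod μ (f := fun x => ENNReal.ofReal ((1 - |x| ^ p) ^ (-(θ * N / p))))
            (by fun_prop)]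
    _ ≤ ENNReal.ofReal (Real.exp (-(θ * m) * N)) *
          ∏ _i : Fin k, ENNReal.ofReal (Real.exp (ε * N)) := by
        gcongr with i
        exact hN i
    _ = _ := by
        rw [prod_ofReal_exp (fun _ => ε), ← ENNReal.ofReal_mul (Real.exp_pos _).le,
          ← Real.exp_add]
        congr 2
        simp only [Finset.sum_const, Finset.card_univ, Fintype.card_fin, nsmul_eq_mul]
        ring

lemma limsup_le_of_le_rateJ (hk : 1 ≤ k) (hp : 1 ≤ p) (ha : ∀ j, 0 < a j)
    (hbpos : ∀ N j, 0 < b N j)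
    (hb : ∀ j : Fin k, Tendsto (fun N : ℕ => p * b N j / N) atTop (𝓝 1))
    {F : Set (Fin k → ℝ)} (hF : MeasurableSet F) {m : ℝ}
    (hm : ∀ c ∈ F ∩ cubeSet k, m ≤ rateJ p k c) :
    limsup (fun N : ℕ => (((N : ℝ)⁻¹ : ℝ) : EReal) *
      ENNReal.log ((Measure.pi fun j : Fin k => radBeta p (a j) (b N j)) F)) atTop ≤
      ((-m : ℝ) : EReal) := by
  refine EReal.le_of_forall_lt_iff_le.1 fun y hy => ?_
  have hη : 0 < y + m := by linarith [EReal.coe_lt_coe_iff.1 hy]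
  have hk0 : (0 : ℝ) < k := by exact_mod_cast hk
  -- the error `δ |m|` from `θ = 1 - δ` and the error `k ε` are each at most `(y + m) / 2`
  obtain ⟨δ, hδ0, hδ1, hδm⟩ : ∃ δ : ℝ, 0 < δ ∧ δ ≤ 1 ∧ δ * m ≤ (y + m) / 2 := by
    refine ⟨min 1 ((y + m) / (2 * (|m| + 1))), lt_min one_pos (by positivity), min_le_left _ _, ?_⟩
    calc _ ≤ min 1 ((y + m) / (2 * (|m| + 1))) * (|m| + 1) := by
          gcongr
          linarith [le_abs_self m]
      _ ≤ (y + m) / (2 * (|m| + 1)) * (|m| + 1) := by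
          gcongr
          exact min_le_right _ _
      _ = (y + m) / 2 := by field_simp
  refine limsup_le_of_le (by isBoundedDefault) ?_
  filter_upwards [eventually_measure_closed_le hp ha hbpos hb hF hm (θ := 1 - δ)
    (ε := (y + m) / (2 * k)) (by linarith) (by linarith) (by positivity), eventually_gt_atTop 0]
    with N h1 h2
  refine (inv_mul_log_mono N h1).trans ?_
  rw [inv_mul_log_exp h2, EReal.coe_le_coe_iff]
  have : (k : ℝ) * ((y + m) / (2 * k)) = (y + m) / 2 := by field_simp
  rw [this]
  linarith

lemma neg_rateJ_le_liminf (hk : 1 ≤ k) (hp : 1 ≤ p) (ha : ∀ j, 0 < a j)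
    (hbpos : ∀ N j, 0 < b N j)
    (hb : ∀ j : Fin k, Tendsto (fun N : ℕ => p * b N j / N) atTop (𝓝 1))
    {G : Set (Fin k → ℝ)} (hG : IsOpen G) {x : Fin k → ℝ} (hxG : x ∈ G) (hx : x ∈ cubeSet k) :
    ((-rateJ p k x : ℝ) : EReal) ≤
      liminf (fun N : ℕ => (((N : ℝ)⁻¹ : ℝ) : EReal) *
        ENNReal.log ((Measure.pi fun j : Fin k => radBeta p (a j) (b N j)) G)) atTop := by
  refine EReal.ge_of_forall_gt_iff_ge.1 fun y hy => ?_
  have hη : 0 < -rateJ p k x - y := by linarith [EReal.coe_lt_coe_iff.1 hy]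
  have hk0 : (0 : ℝ) < k := by exact_mod_cast hk
  obtain ⟨r, hr, hball⟩ := Metric.isOpen_iff.1 hG x hxG
  set ℓ : Fin k → ℝ := fun i => 1 / p * Real.log (1 - |x i| ^ p) - (-rateJ p k x - y) / k with hℓ
  have hsum : ∑ i, ℓ i = y := by
    rw [hℓ, Finset.sum_sub_distrib, ← neg_neg (∑ i, 1 / p * Real.log (1 - |x i| ^ p)),
      ← rateJ_eq_sum hp hx]
    simp only [Finset.sum_const, Finset.card_univ, Fintype.card_fin, nsmul_eq_mul]
    field_simp
    ring
  have hev : ∀ j, ∀ᶠ N : ℕ in atTop, ENNReal.ofReal (Real.exp (ℓ j * N)) ≤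
      radBeta p (a j) (b N j) (Metric.ball (x j) r) := fun j =>
    eventually_le_radBeta hp (ha j) (hb j) (hx j) (Metric.ball_mem_nhds _ hr)
      measurableSet_ball (sub_lt_self _ (by positivity))
  refine le_liminf_of_le (by isBoundedDefault) ?_
  filter_upwards [eventually_all.2 hev, eventually_gt_atTop 0] with N h1 h2
  have hprob : ∀ j, IsProbabilityMeasure (radBeta p (a j) (b N j)) := fun j =>
    isProbabilityMeasure_radBeta p (ha j) (hbpos N j)
  rw [← inv_mul_log_exp h2 y]
  refine inv_mul_log_mono N ?_
  calc ENNReal.ofReal (Real.exp (y * N)) = ∏ i, ENNReal.ofReal (Real.exp (ℓ i * N)) := by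
        rw [prod_ofReal_exp, hsum]
    _ ≤ ∏ i, radBeta p (a i) (b N i) (Metric.ball (x i) r) := Finset.prod_le_prod' fun i _ => h1 i
    _ = (Measure.pi fun j : Fin k => radBeta p (a j) (b N j)) (Metric.ball x r) := by
        rw [ball_pi _ hr, Measure.pi_pi]
    _ ≤ _ := measure_mono hball

end LDP

lemma isCompact_rateJ_le (k : ℕ) {p : ℝ} (hp : 1 ≤ p) (M : ℝ) :
    IsCompact {c | c ∈ cubeSet k ∧ rateJ p k c ≤ M} := by
  have hp0 : 0 < p := by linarith
  -- `J ≤ M` means that the product is at least `exp (-p M)`, which keeps `c` off the boundary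
  have heq : {c | c ∈ cubeSet k ∧ rateJ p k c ≤ M} =
      (univ.pi fun _ : Fin k => Icc (-1 : ℝ) 1) ∩
        {c | Real.exp (-(p * M)) ≤ ∏ i, (1 - |c i| ^ p)} := by
    have hiff : ∀ c : Fin k → ℝ, c ∈ cubeSet k →
        (rateJ p k c ≤ M ↔ Real.exp (-(p * M)) ≤ ∏ i, (1 - |c i| ^ p)) := by
      intro c hc
      rw [← Real.le_log_iff_exp_le
        (Finset.prod_pos fun i _ => one_sub_abs_rpow_pos hp (hc i)), rateJ,
        neg_mul, one_div_mul_eq_div, neg_le, le_div_iff₀ hp0, neg_mul, mul_comm]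
    ext c
    constructor
    · rintro ⟨hc, hJ⟩
      exact ⟨fun i _ => abs_le.1 (hc i).le, (hiff c hc).1 hJ⟩
    · rintro ⟨hc, hJ⟩
      have hcube : c ∈ cubeSet k := by
        intro i
        refine lt_of_le_of_ne (abs_le.2 (hc i (mem_univ i))) fun h => ?_
        have h0 : ∏ i, (1 - |c i| ^ p) = 0 :=
          Finset.prod_eq_zero (Finset.mem_univ i) (by rw [h, Real.one_rpow, sub_self])
        have : Real.exp (-(p * M)) ≤ 0 := h0 ▸ hJ
        exact absurd this (Real.exp_pos _).not_ge
      exact ⟨hcube, (hiff c hcube).2 hJ⟩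
  rw [heq]
  refine (isCompact_univ_pi fun _ => isCompact_Icc).inter_right
    (isClosed_le continuous_const (continuous_finsetProd _ fun i _ => ?_))
  exact continuous_const.sub
    ((continuous_apply i).abs.rpow_const fun _ => Or.inr hp0.le)

/-- LDP for the first `k` canonical coordinates `C^{(N)}` of a `p`-generalized Dirichlet
vector: `C_j^{(N)} = ε_j (Z_j^{(N)})^{1/p}` independent, `Z_j^{(N)} ∼ Beta(a_j, b_j^{(N)})`,
`p b_j^{(N)} = N + o(N)`.  The laws satisfy the LDP on `(-1,1)^k` at speed `N` with good
rate function `J(c) = -(1/p) log ∏ (1-|c_i|^p)`. -/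
theorem statement18 (k : ℕ) (hk : 1 ≤ k) (p : ℝ) (hp : 1 ≤ p)
    (a : Fin k → ℝ) (ha : ∀ j, 0 < a j)
    (b : ℕ → Fin k → ℝ) (hbpos : ∀ N j, 0 < b N j)
    (hb : ∀ j : Fin k, Tendsto (fun N : ℕ => p * b N j / N) atTop (𝓝 1)) :
    (∀ G : Set (Fin k → ℝ), IsOpen G →
      -(⨅ x ∈ G ∩ cubeSet k, ((rateJ p k x : ℝ) : EReal)) ≤
        liminf (fun N : ℕ => (((N : ℝ)⁻¹ : ℝ) : EReal) *
          ENNReal.log ((Measure.pi fun j : Fin k => radBeta p (a j) (b N j)) G)) atTop) ∧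
    (∀ F : Set (Fin k → ℝ), IsClosed F →
      limsup (fun N : ℕ => (((N : ℝ)⁻¹ : ℝ) : EReal) *
          ENNReal.log ((Measure.pi fun j : Fin k => radBeta p (a j) (b N j)) F)) atTop ≤
        -(⨅ x ∈ F ∩ cubeSet k, ((rateJ p k x : ℝ) : EReal))) ∧
    (∀ M : ℝ, IsCompact {c | c ∈ cubeSet k ∧ rateJ p k c ≤ M}) := by
  refine ⟨fun G hG => ?_, fun F hF => ?_, isCompact_rateJ_le k hp⟩
  · refine EReal.neg_le_of_neg_le (le_iInf₂ fun x hx => ?_)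
    refine EReal.neg_le_of_neg_le ?_
    simpa using neg_rateJ_le_liminf hk hp ha hbpos hb hG hx.1 hx.2
  · refine EReal.le_neg_of_le_neg (EReal.ge_of_forall_gt_iff_ge.1 fun m hm => ?_)
    refine EReal.le_neg_of_le_neg ?_
    simpa using limsup_le_of_le_rateJ hk hp ha hbpos hb hF.measurableSet fun c hc =>
      EReal.coe_le_coe_iff.1 (hm.le.trans (iInf₂_le c hc))

end
end
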